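/- (Deroin–Kleptsyn–Navas) Let G be a countable group with an orientation preserving C^1 action on the circle. If there is no G-invariant Borel probability measure on the circle, then there exists an element g ∈ G all of whose fixed points are hyperbolic (the derivative of g at each of its fixed points is different from 1); in particular, g has a nonempty finite set of fixed points. -/

import Mathlib

noncomputable section

open MeasureTheory

/-- The circle `S¹ = ℝ/ℤ`. -/
abbrev 𝕊 : Type := AddCircle (1 : ℝ)

/-- `F : ℝ → ℝ` is a lift of the circle bijection `f` witnessing that `f` is an
orientation preserving homeomorphism of the circle: `F` is a strictly increasing
homeomorphism of `ℝ` (equivalently, continuous and strictly increasing) satisfying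
`F (x + 1) = F x + 1`, and projecting to `f`. -/
def IsOPLift (f : Equiv.Perm 𝕊) (F : ℝ → ℝ) : Prop :=
  Continuous F ∧ StrictMono F ∧ (∀ x : ℝ, F (x + 1) = F x + 1) ∧
    ∀ x : ℝ, f (x : 𝕊) = (F x : 𝕊)

/-- `f` is an orientation preserving homeomorphism of the circle. -/
def IsOPHomeo (f : Equiv.Perm 𝕊) : Prop := ∃ F : ℝ → ℝ, IsOPLift f F

/-- `F` is a lift witnessing that `f` is an orientation preserving `C¹` diffeomorphism
of the circle: an orientation preserving lift which is `C¹` with nowhere vanishing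
derivative. -/
def IsC1Lift (f : Equiv.Perm 𝕊) (F : ℝ → ℝ) : Prop :=
  IsOPLift f F ∧ ContDiff ℝ 1 F ∧ ∀ x : ℝ, deriv F x ≠ 0

/-- `f` is an orientation preserving `C¹` diffeomorphism of the circle, i.e. an element
of `Diff¹₊(S¹)`. -/
def IsC1Diffeo (f : Equiv.Perm 𝕊) : Prop := ∃ F : ℝ → ℝ, IsC1Lift f F

/-!
The lifts to `ℝ` of the maps `ρ g` form a group `Γ`. If the translation number were additive on
`Γ`, all lifts would be simultaneously semiconjugate to translations, and pushing Lebesgue measure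
forward along the semiconjugacy would give an invariant measure on the circle. Otherwise, for each
`ε > 0` consider the supremum `S` of the conjugates by `Γ` of the translation by `ε`. It commutes
with `Γ`, and on maps commuting with `S` the translation number is additive up to twice that of
`S`; the latter is therefore bounded below independently of `ε`. Since `S` moves each point as far
as an interval of length `ε` can be stretched by `Γ`, there is an `N` such that among any `N + 1`
points of the circle two can be brought arbitrarily close together by the action. A compactness
argument then gives pointwise limits of group elements with finite range: there are finite sets `R`
and `A` such that some group element maps the complement of any given neighbourhood of `R` into any
given neighbourhood of `A`.

There is no finite orbit, so by B. H. Neumann's lemma translates of `R` and `A` can be made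
disjoint, which yields a Schottky pair. The images of a small ball under the words of length `n` in
this pair are disjoint, so for most words the lengths of the images under all suffixes decay
exponentially. As the sum of these lengths is bounded, uniform continuity of the logarithmic
derivatives of the two generators bounds the distortion of a word by a constant times an
exponential of arbitrarily small rate, and most words contract strongly near their attractors.
Reversing words shows the same for their inverses near the repellers, so some word has both
properties. A suitable power of it has a fixed point, and each of its fixed points is strongly
attracting or repelling.
-/

open Set Filter Topology
open CircleDeg1Lift (translationNumber translate)

/-- The `ρ`-action preserves some Borel probability measure on the circle. -/
def HasInvariantProbability {G : Type*} [Group G] (ρ : G →* Equiv.Perm 𝕊) : Prop :=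
  ∃ μ : Measure 𝕊, IsProbabilityMeasure μ ∧ ∀ g : G, μ.map (ρ g) = μ

section Lifts

theorem coe_eq_coe_iff_exists_int_add (x y : ℝ) : (x : 𝕊) = (y : 𝕊) ↔ ∃ m : ℤ, x = m + y := by
  rw [← sub_eq_zero, ← AddCircle.coe_sub, AddCircle.coe_eq_zero_iff]
  simp [eq_comm, sub_eq_iff_eq_add]

theorem coe_int_add (m : ℤ) (x : ℝ) : ((m + x : ℝ) : 𝕊) = (x : 𝕊) :=
  (coe_eq_coe_iff_exists_int_add _ _).2 ⟨m, rfl⟩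

theorem unit_strictMono (u : CircleDeg1Liftˣ) : StrictMono u := by
  rw [← CircleDeg1Lift.coe_toOrderIso]
  exact OrderIso.strictMono _

theorem IsOPHomeo.continuous {f : Equiv.Perm 𝕊} (hf : IsOPHomeo f) : Continuous f := by
  obtain ⟨F, hF, -, -, hfF⟩ := hf
  rw [QuotientAddGroup.isOpenQuotientMap_mk.isQuotientMap.continuous_iff]
  exact ((AddCircle.continuous_mk' _).comp hF).congr fun x => (hfF x).symm

theorem IsC1Diffeo.isOPHomeo {f : Equiv.Perm 𝕊} (hf : IsC1Diffeo f) : IsOPHomeo f :=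
  hf.imp fun _ hF => hF.1

theorem IsOPHomeo.exists_unit {f : Equiv.Perm 𝕊} (hf : IsOPHomeo f) :
    ∃ u : CircleDeg1Liftˣ, ∀ x : ℝ, f x = (u x : ℝ) := by
  obtain ⟨F, hFc, hFm, hF1, hfF⟩ := hf
  let φ : CircleDeg1Lift := ⟨⟨F, hFm.monotone⟩, hF1⟩
  have hφ : IsUnit φ := CircleDeg1Lift.isUnit_iff_bijective.2
    ⟨hFm.injective, φ.continuous_iff_surjective.1 hFc⟩
  exact ⟨hφ.unit, hfF⟩

variable {G : Type*} [Group G]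

/-- The group of all lifts to `ℝ` of the circle maps `ρ g`; for an action by orientation
preserving homeomorphisms it is an extension of `ρ(G)` by the integer translations. -/
def liftGroup (ρ : G →* Equiv.Perm 𝕊) : Subgroup CircleDeg1Liftˣ where
  carrier := {u | ∃ g, ∀ x : ℝ, ρ g x = (u x : ℝ)}
  mul_mem' := by
    rintro u v ⟨g, hg⟩ ⟨h, hh⟩
    exact ⟨g * h, fun x => by simp [hg, hh]⟩
  one_mem' := ⟨1, fun x => by simp⟩
  inv_mem' := by
    rintro u ⟨g, hg⟩
    refine ⟨g⁻¹, fun x => ?_⟩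
    rw [map_inv, Equiv.Perm.inv_eq_iff_eq, hg]
    simp

end Lifts

section InvariantMeasure

/-- The degree one circle map `x mod ℤ ↦ F x mod ℤ`. -/
def degreeOneMap (F : CircleDeg1Lift) : 𝕊 → 𝕊 :=
  Function.Periodic.lift (f := fun x => (F x : 𝕊)) (c := 1) fun x => by simp

theorem degreeOneMap_coe (F : CircleDeg1Lift) (x : ℝ) : degreeOneMap F x = (F x : ℝ) := rfl

theorem measurable_degreeOneMap (F : CircleDeg1Lift) : Measurable (degreeOneMap F) :=
  measurable_from_quotient.2 (AddCircle.measurable_mk'.comp F.monotone.measurable)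

theorem exists_semiconj_of_translationNumber_mul {H : Type*} [Group H] (f : H →* CircleDeg1Lift)
    (hf : ∀ u v, translationNumber (f (u * v)) =
      translationNumber (f u) + translationNumber (f v)) :
    ∃ F : CircleDeg1Lift, ∀ u x, F (translationNumber (f u) + x) = f u (F x) := by
  let τ : H →* Multiplicative ℝ :=
    { toFun := fun u => Multiplicative.ofAdd (translationNumber (f u))
      map_one' := by simp
      map_mul' := fun u v => by rw [← ofAdd_add, hf] }
  let T : H →* CircleDeg1Lift := (Units.coeHom _).comp (translate.comp τ)
  obtain ⟨F, hF⟩ := CircleDeg1Lift.semiconj_of_group_action_of_forall_translationNumber_eq T f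
    fun u => CircleDeg1Lift.translationNumber_translate _
  exact ⟨F, fun u x => hF u x⟩

variable {G : Type*} [Group G] {ρ : G →* Equiv.Perm 𝕊}

theorem hasInvariantProbability_of_translationNumber_mul (hρ : ∀ g, IsOPHomeo (ρ g))
    (hτ : ∀ u ∈ liftGroup ρ, ∀ v ∈ liftGroup ρ,
      translationNumber ((u * v : CircleDeg1Liftˣ) : CircleDeg1Lift) =
        translationNumber u + translationNumber v) :
    HasInvariantProbability ρ := by
  obtain ⟨F, hF⟩ := exists_semiconj_of_translationNumber_mul
    ((Units.coeHom _).comp (liftGroup ρ).subtype) fun u v => hτ u u.2 v v.2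
  have hFm := measurable_degreeOneMap F
  refine ⟨AddCircle.haarAddCircle.map (degreeOneMap F),
    Measure.isProbabilityMeasure_map hFm.aemeasurable, fun g => ?_⟩
  obtain ⟨u, hu⟩ := (hρ g).exists_unit
  have hsemi : ρ g ∘ degreeOneMap F = degreeOneMap F ∘ ((translationNumber u : 𝕊) + ·) := by
    funext z
    induction z using QuotientAddGroup.induction_on with | H x =>
    have hx : F (translationNumber u + x) = u (F x) := hF ⟨u, g, hu⟩ x
    calc ρ g (F x : ℝ) = (F (translationNumber u + x) : ℝ) := by rw [hu, hx]
      _ = degreeOneMap F ((translationNumber u : 𝕊) + x) := rfl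
  rw [Measure.map_map (hρ g).continuous.measurable hFm, hsemi,
    ← Measure.map_map hFm (measurable_const_add _),
    (measurePreserving_add_left AddCircle.haarAddCircle _).map_eq]

end InvariantMeasure

section ConjSup

theorem conj_apply_le (f : CircleDeg1Lift) (u : CircleDeg1Liftˣ) (x : ℝ) :
    u⁻¹ (f (u x)) ≤ x + ⌈f 0 + 1⌉ := by
  have hf : f (u x) ≤ u x + ⌈f 0 + 1⌉ := by
    linarith [f.map_le_of_map_zero (u x), Int.ceil_lt_add_one (u x), Int.le_ceil (f 0 + 1)]
  calc u⁻¹ (f (u x)) ≤ u⁻¹ (u x + ⌈f 0 + 1⌉) := (unit_strictMono u⁻¹).monotone hf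
    _ = x + ⌈f 0 + 1⌉ := by rw [CircleDeg1Lift.map_add_int, CircleDeg1Lift.units_inv_apply_apply]

theorem bddAbove_range_conj (Γ : Subgroup CircleDeg1Liftˣ) (f : CircleDeg1Lift) (x : ℝ) :
    BddAbove (range fun u : Γ => (u : CircleDeg1Liftˣ)⁻¹ (f ((u : CircleDeg1Liftˣ) x))) :=
  ⟨x + ⌈f 0 + 1⌉, forall_mem_range.2 fun u => conj_apply_le f u x⟩

/-- The pointwise supremum of the conjugates `u⁻¹ f u` of a degree one map over `u ∈ Γ`; it
commutes with `Γ`. Applied to the translation by `ε`, it moves each point as far as an interval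
that some element of `Γ` shrinks to length `ε`. -/
def conjSup (Γ : Subgroup CircleDeg1Liftˣ) (f : CircleDeg1Lift) : CircleDeg1Lift where
  toFun x := ⨆ u : Γ, (u : CircleDeg1Liftˣ)⁻¹ (f ((u : CircleDeg1Liftˣ) x))
  monotone' x y hxy := ciSup_mono (bddAbove_range_conj Γ f y) fun u =>
    (unit_strictMono _).monotone (f.monotone ((unit_strictMono _).monotone hxy))
  map_add_one' x := by
    simp only [CircleDeg1Lift.map_add_one]
    exact (ciSup_add (bddAbove_range_conj Γ f x) 1).symm

theorem conjSup_apply (Γ : Subgroup CircleDeg1Liftˣ) (f : CircleDeg1Lift) (x : ℝ) :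
    conjSup Γ f x = ⨆ u : Γ, (u : CircleDeg1Liftˣ)⁻¹ (f ((u : CircleDeg1Liftˣ) x)) := rfl

theorem le_conjSup (Γ : Subgroup CircleDeg1Liftˣ) (f : CircleDeg1Lift) (x : ℝ) :
    f x ≤ conjSup Γ f x := by
  simpa [conjSup_apply] using le_ciSup (bddAbove_range_conj Γ f x) 1

theorem commute_conjSup {Γ : Subgroup CircleDeg1Liftˣ} {v : CircleDeg1Liftˣ} (hv : v ∈ Γ)
    (f : CircleDeg1Lift) : Commute (conjSup Γ f) v := by
  rw [CircleDeg1Lift.commute_iff_commute]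
  intro x
  have hsup := (CircleDeg1Lift.toOrderIso v).map_ciSup (bddAbove_range_conj Γ f x)
  rw [CircleDeg1Lift.coe_toOrderIso, ← conjSup_apply] at hsup
  rw [hsup, conjSup_apply, ← (Equiv.mulRight (⟨v, hv⟩ : Γ)⁻¹).iSup_comp]
  simp

theorem exists_lt_of_lt_conjSup {Γ : Subgroup CircleDeg1Liftˣ} {f : CircleDeg1Lift} {x y : ℝ}
    (h : y < conjSup Γ f x) : ∃ u ∈ Γ, u y < f (u x) := by
  obtain ⟨u, hu⟩ := exists_lt_of_lt_ciSup h
  exact ⟨u, u.2, by simpa using unit_strictMono (u : CircleDeg1Liftˣ) hu⟩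

end ConjSup

section TranslationNumber

theorem translationNumber_le_of_commute {f g : CircleDeg1Lift} (h : Commute f g) {x : ℝ}
    (hx : f x ≤ g x) : translationNumber f ≤ translationNumber g := by
  refine le_of_tendsto_of_tendsto' (f.tendsto_translationNumber x)
    (g.tendsto_translationNumber x) fun n => ?_
  have : (f ^ n) x ≤ (g ^ n) x := by
    rw [CircleDeg1Lift.coe_pow, CircleDeg1Lift.coe_pow]
    exact Function.Commute.iterate_le_of_map_le (CircleDeg1Lift.commute_iff_commute.1 h)
      f.monotone g.monotone hx n
  gcongr

theorem commute_translate_int (m : ℤ) (f : CircleDeg1Lift) :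
    Commute ((translate (Multiplicative.ofAdd (m : ℝ)) : CircleDeg1Liftˣ) : CircleDeg1Lift) f :=
  CircleDeg1Lift.commute_iff_commute.2 fun x => by
    simp only [CircleDeg1Lift.translate_apply, CircleDeg1Lift.map_int_add]

theorem translationNumber_translate_int_mul (m : ℤ) (f : CircleDeg1Lift) :
    translationNumber ((translate (Multiplicative.ofAdd (m : ℝ)) : CircleDeg1Liftˣ) * f) =
      m + translationNumber f := by
  rw [CircleDeg1Lift.translationNumber_mul_of_commute (commute_translate_int m f),
    CircleDeg1Lift.translationNumber_translate]

theorem exists_pow_apply_zero_le_lt {S : CircleDeg1Lift} {ε : ℝ} (hε : 0 < ε)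
    (hS : ∀ x, x + ε ≤ S x) {x : ℝ} (hx : 0 ≤ x) :
    ∃ k : ℕ, (S ^ k) 0 ≤ x ∧ x < (S ^ (k + 1)) 0 := by
  have hgrow : ∀ k : ℕ, k * ε ≤ (S ^ k) 0 := fun k => by
    induction k with
    | zero => simp
    | succ k ih =>
      rw [pow_succ', CircleDeg1Lift.mul_apply]
      push_cast
      linarith [hS ((S ^ k) 0)]
  have hunbdd : ¬ BddAbove (range fun k : ℕ => (S ^ k) 0) := fun ⟨B, hB⟩ => by
    obtain ⟨k, hk⟩ := exists_nat_gt (B / ε)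
    exact ((div_lt_iff₀ hε).1 hk).not_ge ((hgrow k).trans (hB ⟨k, rfl⟩))
  have hcover := iUnion_Ico_map_succ_eq_Ici (f := fun k : ℕ => (S ^ k) 0)
    (fun k => (hgrow k).trans' (by
      simp only [Nat.bot_eq_zero, pow_zero, CircleDeg1Lift.coe_one, id_eq]
      positivity)) hunbdd
  simpa using hcover.symm.subset (show x ∈ Ici _ by simpa using hx)

theorem pow_add_apply_zero_le_mul {S u v : CircleDeg1Lift} (hu : Commute S u) {k l : ℕ}
    (hk : (S ^ k) 0 ≤ u 0) (hl : (S ^ l) 0 ≤ v 0) : (S ^ (k + l)) 0 ≤ (u * v) 0 :=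
  calc (S ^ (k + l)) 0 = (S ^ l) ((S ^ k) 0) := by rw [add_comm, pow_add]; rfl
    _ ≤ (S ^ l) (u 0) := (S ^ l).monotone hk
    _ = u ((S ^ l) 0) := CircleDeg1Lift.commute_iff_commute.1 (hu.pow_left l) 0
    _ ≤ u (v 0) := u.monotone hl

theorem mul_apply_zero_le_pow_add {S u v : CircleDeg1Lift} (hu : Commute S u) {k l : ℕ}
    (hk : u 0 ≤ (S ^ k) 0) (hl : v 0 ≤ (S ^ l) 0) : (u * v) 0 ≤ (S ^ (k + l)) 0 :=
  calc u (v 0) ≤ u ((S ^ l) 0) := u.monotone hl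
    _ = (S ^ l) (u 0) := (CircleDeg1Lift.commute_iff_commute.1 (hu.pow_left l) 0).symm
    _ ≤ (S ^ l) ((S ^ k) 0) := (S ^ l).monotone hk
    _ = (S ^ (k + l)) 0 := by rw [add_comm, pow_add]; rfl

theorem abs_translationNumber_mul_sub_le_of_nonneg {S u v : CircleDeg1Lift} {ε : ℝ} (hε : 0 < ε)
    (hS : ∀ x, x + ε ≤ S x) (hu : Commute S u) (hv : Commute S v) (hu₀ : 0 ≤ u 0)
    (hv₀ : 0 ≤ v 0) :
    |translationNumber (u * v) - translationNumber u - translationNumber v| ≤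
      2 * translationNumber S := by
  have lower {w : CircleDeg1Lift} {k : ℕ} (hw : Commute S w) (h : (S ^ k) 0 ≤ w 0) :
      k * translationNumber S ≤ translationNumber w := by
    simpa using translationNumber_le_of_commute (hw.pow_left k) h
  have upper {w : CircleDeg1Lift} {k : ℕ} (hw : Commute S w) (h : w 0 ≤ (S ^ k) 0) :
      translationNumber w ≤ k * translationNumber S := by
    simpa using translationNumber_le_of_commute (hw.pow_left k).symm h
  obtain ⟨k, hk, hk'⟩ := exists_pow_apply_zero_le_lt hε hS hu₀
  obtain ⟨l, hl, hl'⟩ := exists_pow_apply_zero_le_lt hε hS hv₀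
  have hku := lower hu hk
  have hku' := upper hu hk'.le
  have hlv := lower hv hl
  have hlv' := upper hv hl'.le
  have huv := lower (hu.mul_right hv) (pow_add_apply_zero_le_mul hu hk hl)
  have huv' := upper (hu.mul_right hv) (mul_apply_zero_le_pow_add hu hk'.le hl'.le)
  push_cast at *
  rw [abs_le]
  constructor <;> linarith

theorem abs_translationNumber_mul_sub_le {S u v : CircleDeg1Lift} {ε : ℝ} (hε : 0 < ε)
    (hS : ∀ x, x + ε ≤ S x) (hu : Commute S u) (hv : Commute S v) :
    |translationNumber (u * v) - translationNumber u - translationNumber v| ≤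
      2 * translationNumber S := by
  let T (m : ℤ) : CircleDeg1Lift := (translate (Multiplicative.ofAdd (m : ℝ)) : CircleDeg1Liftˣ)
  have hT (m : ℤ) (w : CircleDeg1Lift) : Commute (T m) w := commute_translate_int m w
  have hτT (m : ℤ) (w : CircleDeg1Lift) :
      translationNumber (T m * w) = m + translationNumber w :=
    translationNumber_translate_int_mul m w
  obtain ⟨m, hm⟩ := exists_int_gt (-(u 0))
  obtain ⟨n, hn⟩ := exists_int_gt (-(v 0))
  have key := abs_translationNumber_mul_sub_le_of_nonneg hε hS
    ((hT m S).symm.mul_right hu) ((hT n S).symm.mul_right hv)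
    (show 0 ≤ (m : ℝ) + u 0 by linarith) (show 0 ≤ (n : ℝ) + v 0 by linarith)
  rw [show T m * u * (T n * v) = T m * (T n * (u * v)) by
    rw [mul_assoc, ← mul_assoc u, ← (hT n u).eq, mul_assoc (T n)], hτT, hτT, hτT, hτT] at key
  convert key using 2
  ring

end TranslationNumber

section Proximality

theorem exists_ne_lt_map_of_card_lt {S : CircleDeg1Lift} {ε : ℝ} (hε : 0 < ε)
    (hS : ∀ x, x + ε ≤ S x) {N : ℕ} (hN : 1 < N * translationNumber S) {α : Type*}
    {Z : Finset α} {r : α → ℝ} (hr : ∀ z, r z ∈ Ico (0 : ℝ) 1) (hZ : N < Z.card) :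
    ∃ x ∈ Z, ∃ y ∈ Z, x ≠ y ∧ r x ≤ r y ∧ r y < S (r x) := by
  have hSN : 1 < (S ^ N) 0 := by
    simpa using CircleDeg1Lift.lt_map_of_nat_lt_translationNumber (f := S ^ N) (n := 1) (x := 0)
      (by simpa using hN)
  choose κ hκ hκ' using fun z => exists_pow_apply_zero_le_lt hε hS (hr z).1
  have hκN : ∀ z, κ z < N := fun z => by
    by_contra! h
    have hmono : Monotone fun k : ℕ => (S ^ k) 0 := monotone_nat_of_le_succ fun k => by
      rw [pow_succ', CircleDeg1Lift.mul_apply]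
      linarith [hS ((S ^ k) 0)]
    linarith [hmono h, hκ z, (hr z).2]
  obtain ⟨x, hx, y, hy, hxy, hκxy⟩ := Finset.exists_ne_map_eq_of_card_lt_of_maps_to
    (t := Finset.range N) (by simpa using hZ) fun z _ => by simpa using hκN z
  have hlt {x y : α} (h : κ x = κ y) : r y < S (r x) := by
    have hy := hκ' y
    rw [pow_succ', CircleDeg1Lift.mul_apply, ← h] at hy
    exact hy.trans_le (S.monotone (hκ x))
  rcases le_total (r x) (r y) with h | h
  · exact ⟨x, hx, y, hy, hxy, h, hlt hκxy⟩
  · exact ⟨y, hy, x, hx, hxy.symm, h, hlt hκxy.symm⟩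

theorem dist_coe_le (x y : ℝ) : dist (x : 𝕊) y ≤ |x - y| := by
  rw [dist_eq_norm, ← AddCircle.coe_sub]
  exact QuotientAddGroup.norm_mk_le_norm

variable {G : Type*} [Group G] {ρ : G →* Equiv.Perm 𝕊}

theorem le_conjSup_translate (Γ : Subgroup CircleDeg1Liftˣ) (ε x : ℝ) :
    x + ε ≤ conjSup Γ (translate (Multiplicative.ofAdd ε) : CircleDeg1Liftˣ) x := by
  simpa [add_comm] using
    le_conjSup Γ ((translate (Multiplicative.ofAdd ε) : CircleDeg1Liftˣ) : CircleDeg1Lift) x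

theorem exists_pos_lt_translationNumber_conjSup (hρ : ∀ g, IsOPHomeo (ρ g))
    (hno : ¬ HasInvariantProbability ρ) :
    ∃ c > 0, ∀ ε > 0, c < translationNumber
      (conjSup (liftGroup ρ) (translate (Multiplicative.ofAdd ε) : CircleDeg1Liftˣ)) := by
  by_contra! hcon
  refine hno (hasInvariantProbability_of_translationNumber_mul hρ fun u hu v hv => ?_)
  suffices |translationNumber ((u * v : CircleDeg1Liftˣ) : CircleDeg1Lift)
      - translationNumber u - translationNumber v| ≤ 0 by
    linarith [abs_nonpos_iff.1 this]
  refine le_of_forall_pos_le_add fun δ hδ => ?_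
  obtain ⟨ε, hε, h⟩ := hcon (δ / 2) (by positivity)
  have := abs_translationNumber_mul_sub_le hε (le_conjSup_translate (liftGroup ρ) ε)
    (commute_conjSup hu _) (commute_conjSup hv _)
  rw [Units.val_mul]
  linarith

theorem exists_dist_le_of_card_lt (hρ : ∀ g, IsOPHomeo (ρ g))
    (hno : ¬ HasInvariantProbability ρ) :
    ∃ N : ℕ, ∀ Z : Finset 𝕊, N < Z.card → ∀ ε > 0,
      ∃ x ∈ Z, ∃ y ∈ Z, x ≠ y ∧ ∃ g, dist (ρ g x) (ρ g y) ≤ ε := by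
  obtain ⟨c, hc, hcτ⟩ := exists_pos_lt_translationNumber_conjSup hρ hno
  obtain ⟨N, hN⟩ := exists_nat_gt (1 / c)
  refine ⟨N, fun Z hZ ε hε => ?_⟩
  have hN' : 1 < N * translationNumber
      (conjSup (liftGroup ρ) (translate (Multiplicative.ofAdd ε) : CircleDeg1Liftˣ)) :=
    ((div_lt_iff₀ hc).1 hN).trans_le (by gcongr; exact (hcτ ε hε).le)
  let r (z : 𝕊) : ℝ := AddCircle.equivIco 1 0 z
  have hr (z : 𝕊) : (r z : 𝕊) = z := (AddCircle.equivIco 1 0).symm_apply_apply z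
  obtain ⟨x, hx, y, hy, hxy, hle, hlt⟩ := exists_ne_lt_map_of_card_lt hε
    (le_conjSup_translate (liftGroup ρ) ε) hN'
    (fun z => by simpa using (AddCircle.equivIco 1 0 z).2) hZ
  obtain ⟨u, ⟨g, hg⟩, hu⟩ := exists_lt_of_lt_conjSup hlt
  refine ⟨x, hx, y, hy, hxy, g, ?_⟩
  rw [← hr x, ← hr y, hg, hg, dist_comm]
  refine (dist_coe_le _ _).trans ?_
  rw [CircleDeg1Lift.translate_apply] at hu
  rw [abs_of_nonneg (sub_nonneg.2 ((unit_strictMono u).monotone hle))]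
  linarith

end Proximality

section Collapse

variable {X : Type*} {E : Set (X → X)}

theorem comp_mem_closure_of_continuous [TopologicalSpace X] (hcont : ∀ f ∈ E, Continuous f)
    (hcomp : ∀ f ∈ E, ∀ g ∈ E, f ∘ g ∈ E) {f g : X → X} (hf : f ∈ closure E)
    (hg : g ∈ closure E) : f ∘ g ∈ closure E := by
  have hleft : ∀ f ∈ E, f ∘ g ∈ closure E := fun f hf =>
    map_mem_closure (f := fun g : X → X => f ∘ g)
      (continuous_pi fun x => (hcont f hf).comp (continuous_apply x)) hg (hcomp f hf)
  have hright : Continuous fun f : X → X => f ∘ g := continuous_pi fun x => continuous_apply (g x)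
  simpa using map_mem_closure hright hf hleft

theorem exists_not_injOn_of_dist_le [MetricSpace X] (hE : IsCompact E) {Z : Finset X}
    (h : ∀ ε > 0, ∃ f ∈ E, ∃ x ∈ Z, ∃ y ∈ Z, x ≠ y ∧ dist (f x) (f y) ≤ ε) :
    ∃ f ∈ E, ¬ InjOn f Z := by
  obtain ⟨f₁, hf₁, x₁, hx₁, y₁, hy₁, hxy₁, -⟩ := h 1 one_pos
  have hZ : Z.offDiag.Nonempty := ⟨(x₁, y₁), by simp [*]⟩
  have hcont : Continuous fun f : X → X =>
      Z.offDiag.inf' hZ fun p => dist (f p.1) (f p.2) :=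
    Continuous.finset_inf'_apply hZ fun p _ =>
      (continuous_apply p.1).dist (continuous_apply p.2)
  obtain ⟨f, hf, hmin⟩ := hE.exists_isMinOn ⟨f₁, hf₁⟩ hcont.continuousOn
  refine ⟨f, hf, fun hinj => ?_⟩
  have hpos : 0 < Z.offDiag.inf' hZ fun p => dist (f p.1) (f p.2) := by
    refine (Finset.lt_inf'_iff hZ).2 fun p hp => dist_pos.2 fun heq => ?_
    obtain ⟨hp₁, hp₂, hne⟩ := Finset.mem_offDiag.1 hp
    exact hne (hinj hp₁ hp₂ heq)
  obtain ⟨g, hg, x, hx, y, hy, hxy, hdist⟩ := h _ (half_pos hpos)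
  have hle : (Z.offDiag.inf' hZ fun p => dist (g p.1) (g p.2)) ≤ dist (g x) (g y) :=
    Finset.inf'_le (fun p : X × X => dist (g p.1) (g p.2)) (b := (x, y)) (by simp [*])
  linarith [isMinOn_iff.1 hmin g hg]

theorem exists_card_image_le [DecidableEq X] (hne : E.Nonempty)
    (hcomp : ∀ f ∈ E, ∀ g ∈ E, f ∘ g ∈ E) {N : ℕ}
    (h : ∀ Z : Finset X, N < Z.card → ∃ f ∈ E, ¬ InjOn f Z) (P : Finset X) :
    ∃ f ∈ E, (P.image f).card ≤ N := by
  obtain ⟨f, hf, hmin⟩ := exists_minimalFor_of_wellFoundedLT (· ∈ E) (fun f => (P.image f).card) hne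
  refine ⟨f, hf, ?_⟩
  by_contra! hcard
  obtain ⟨g, hg, hinj⟩ := h _ hcard
  have hlt : ((P.image f).image g).card < (P.image f).card :=
    Finset.card_image_le.lt_of_ne fun heq => hinj (Finset.card_image_iff.1 heq)
  rw [Finset.image_image] at hlt
  exact hlt.not_ge (hmin (hcomp g hg f hf) hlt.le)

theorem isClosed_setOf_not_injOn [TopologicalSpace X] [T2Space X] (Q : Finset X) :
    IsClosed {f : X → X | ¬ InjOn f Q} := by
  have : {f : X → X | ¬ InjOn f Q} = ⋃ x ∈ Q, ⋃ y ∈ Q, {f | f x = f y ∧ x ≠ y} := by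
    ext f
    simp [InjOn, and_left_comm]
  rw [this]
  refine isClosed_biUnion_finset fun x _ => isClosed_biUnion_finset fun y _ => ?_
  exact (isClosed_eq (continuous_apply x) (continuous_apply y)).inter isClosed_const

theorem exists_finite_range_of_not_injOn [TopologicalSpace X] [T2Space X] (hE : IsCompact E)
    (hne : E.Nonempty) (hcomp : ∀ f ∈ E, ∀ g ∈ E, f ∘ g ∈ E) {N : ℕ}
    (h : ∀ Z : Finset X, N < Z.card → ∃ f ∈ E, ¬ InjOn f Z) :
    ∃ f ∈ E, (range f).Finite := by
  classical
  have hfin (u : Finset {Q : Finset X // N < Q.card}) :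
      (E ∩ ⋂ Q ∈ u, {f : X → X | ¬ InjOn f Q.1}).Nonempty := by
    obtain ⟨f, hf, hcard⟩ := exists_card_image_le hne hcomp h (u.biUnion (·.1))
    refine ⟨f, hf, mem_iInter₂.2 fun Q hQ hinj => hcard.not_gt ?_⟩
    calc N < Q.1.card := Q.2
      _ = (Q.1.image f).card := (Finset.card_image_iff.2 hinj).symm
      _ ≤ _ := by gcongr; exact Finset.subset_biUnion_of_mem (·.1) hQ
  obtain ⟨f, hf, hf'⟩ := hE.inter_iInter_nonempty
    (fun Q : {Q : Finset X // N < Q.card} => {f : X → X | ¬ InjOn f Q.1})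
    (fun Q => isClosed_setOf_not_injOn Q.1) hfin
  refine ⟨f, hf, by_contra fun hinf => ?_⟩
  obtain ⟨s, -, hs⟩ := exists_subset_bijOn univ f
  rw [image_univ] at hs
  have hsinf : s.Infinite := fun hs' => hinf (hs.image_eq ▸ hs'.image f)
  obtain ⟨Q, hQs, hQ⟩ := hsinf.exists_subset_card_eq (N + 1)
  exact mem_iInter.1 hf' ⟨Q, hQ ▸ N.lt_succ_self⟩ (hs.injOn.mono hQs)

end Collapse

section FiniteRange

variable {G : Type*} [Group G] {ρ : G →* Equiv.Perm 𝕊}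

theorem exists_finite_range_mem_closure (hρ : ∀ g, IsOPHomeo (ρ g))
    (hno : ¬ HasInvariantProbability ρ) :
    ∃ f ∈ closure (range fun g => ⇑(ρ g)), (range f).Finite := by
  obtain ⟨N, hN⟩ := exists_dist_le_of_card_lt hρ hno
  refine exists_finite_range_of_not_injOn (N := N) isClosed_closure.isCompact
    ⟨_, subset_closure ⟨1, rfl⟩⟩
    (fun f hf g hg => comp_mem_closure_of_continuous ?_ ?_ hf hg) fun Z hZ => ?_
  · rintro _ ⟨g, rfl⟩
    exact (hρ g).continuous
  · rintro _ ⟨g, rfl⟩ _ ⟨h, rfl⟩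
    exact ⟨g * h, by simp⟩
  · refine exists_not_injOn_of_dist_le isClosed_closure.isCompact fun ε hε => ?_
    obtain ⟨x, hx, y, hy, hxy, g, hg⟩ := hN Z hZ ε hε
    exact ⟨_, subset_closure ⟨g, rfl⟩, x, hx, y, hy, hxy, hg⟩

end FiniteRange

section DegreeOneLimit

open Metric (thickening)

theorem exists_tendsto_ultrafilter {ι : Type*} (𝒰 : Ultrafilter ι) {u : ι → CircleDeg1Lift}
    (hu : ∀ i, u i 0 ∈ Icc (0 : ℝ) 1) :
    ∃ F : CircleDeg1Lift, ∀ x, Tendsto (fun i => u i x) 𝒰 (𝓝 (F x)) := by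
  have hlim (x : ℝ) : ∃ y, Tendsto (fun i => u i x) 𝒰 (𝓝 y) := by
    have hmem (i : ι) : u i x ∈ Icc (⌊x⌋ : ℝ) (1 + ⌈x⌉) :=
      ⟨by linarith [(u i).le_map_of_map_zero x, (hu i).1],
        by linarith [(u i).map_le_of_map_zero x, (hu i).2]⟩
    obtain ⟨y, -, hy⟩ := isCompact_Icc.ultrafilter_le_nhds (𝒰.map fun i => u i x)
      (le_principal_iff.2 (Filter.mem_map.2 (univ_mem' hmem)))
    exact ⟨y, hy⟩
  choose F hF using hlim
  refine ⟨⟨⟨F, fun x y hxy => ?_⟩, fun x => ?_⟩, hF⟩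
  · exact le_of_tendsto_of_tendsto' (hF x) (hF y) fun i => (u i).monotone hxy
  · refine tendsto_nhds_unique (hF (x + 1)) (((hF x).add_const 1).congr fun i => ?_)
    rw [CircleDeg1Lift.map_add_one]

theorem eventually_mapsTo_thickening_range {ι : Type*} {l : Filter ι} {u : ι → CircleDeg1Lift}
    {F : CircleDeg1Lift} (hu : ∀ x, Tendsto (fun i => u i x) l (𝓝 (F x))) {K : Set 𝕊}
    (hK : IsCompact K) (hF : ∀ z : ℝ, (z : 𝕊) ∈ K → ∃ p q, p < z ∧ z < q ∧ F p = F q)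
    {ε : ℝ} (hε : 0 < ε) :
    ∀ᶠ i in l, MapsTo (degreeOneMap (u i)) K (thickening ε (range (degreeOneMap F))) := by
  refine hK.induction_on (p := fun s => ∀ᶠ i in l,
      MapsTo (degreeOneMap (u i)) s (thickening ε (range (degreeOneMap F))))
    (.of_forall fun i => mapsTo_empty _ _) (fun s t hst ht => ht.mono fun i hi => hi.mono_left hst)
    (fun s t hs ht => (hs.and ht).mono fun i hi => hi.1.union hi.2) fun z hz => ?_
  induction z using QuotientAddGroup.induction_on with | H z =>
  obtain ⟨p, q, hpz, hzq, hpq⟩ := hF z hz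
  refine ⟨(↑) '' Ioo p q, mem_nhdsWithin_of_mem_nhds
    (QuotientAddGroup.isOpenMap_coe.image_mem_nhds (Ioo_mem_nhds hpz hzq)), ?_⟩
  filter_upwards [(hu p).eventually_const_lt (sub_lt_self (F p) hε),
    (hu q).eventually_lt_const (hpq ▸ lt_add_of_pos_right (F p) hε)] with i hip hiq
  rintro _ ⟨x, hx, rfl⟩
  refine Metric.mem_thickening_iff.2 ⟨_, mem_range_self (p : 𝕊), ?_⟩
  refine (dist_coe_le _ _).trans_lt (abs_lt.2 ⟨?_, ?_⟩)
  · linarith [(u i).monotone hx.1.le]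
  · linarith [(u i).monotone hx.2.le]

theorem exists_finite_forall_exists_map_eq {F : CircleDeg1Lift}
    (hF : (range (degreeOneMap F)).Finite) :
    ∃ R : Set 𝕊, R.Finite ∧
      ∀ z : ℝ, (z : 𝕊) ∉ R → ∃ p q, p < z ∧ z < q ∧ F p = F q := by
  let level (a : 𝕊) : Set ℝ := F ⁻¹' {(AddCircle.equivIco 1 0 a : ℝ)}
  refine ⟨⋃ a ∈ range (degreeOneMap F),
    (↑) '' ({z | IsLeast (level a) z} ∪ {z | IsGreatest (level a) z}),
    hF.biUnion fun a _ => Finite.image _ (Finite.union ?_ ?_), fun z hz => ?_⟩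
  · exact Subsingleton.finite fun x hx y hy => hx.unique hy
  · exact Subsingleton.finite fun x hx y hy => hx.unique hy
  obtain ⟨m, hm⟩ := (coe_eq_coe_iff_exists_int_add _ _).1
    ((AddCircle.equivIco 1 0).symm_apply_apply (F z : 𝕊))
  have hshift (x : ℝ) (hx : x ∈ level (F z)) : F (x - m) = F z := by
    rw [CircleDeg1Lift.map_sub_int, show F x = _ from hx, hm, add_sub_cancel_left]
  have hmem : m + z ∈ level (F z) := by
    rw [show level (F z) = F ⁻¹' {(m + F z : ℝ)} from congrArg (F ⁻¹' {·}) hm]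
    exact F.map_int_add m z
  have hz' : ¬ IsLeast (level (F z)) (m + z) ∧ ¬ IsGreatest (level (F z)) (m + z) := by
    rw [← not_or]
    exact fun h => hz (mem_biUnion (mem_range_self (z : 𝕊)) ⟨m + z, h, coe_int_add m z⟩)
  simp only [IsLeast, IsGreatest, hmem, true_and, mem_lowerBounds, mem_upperBounds, not_forall,
    not_le] at hz'
  obtain ⟨⟨p, hp, hpz⟩, q, hq, hzq⟩ := hz'
  exact ⟨p - m, q - m, by linarith, by linarith, by rw [hshift p hp, hshift q hq]⟩

end DegreeOneLimit

section Collapses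

open Metric (thickening)

variable {G : Type*} [Group G]

/-- The action collapses the complement of `R` onto `A`: for every `ε` some group element maps
the complement of the `ε`-neighbourhood of `R` into the `ε`-neighbourhood of `A`. -/
def Collapses {X : Type*} [PseudoMetricSpace X] (ρ : G →* Equiv.Perm X) (R A : Set X) : Prop :=
  ∀ ε > 0, ∃ g, MapsTo (ρ g) (thickening ε R)ᶜ (thickening ε A)

variable {ρ : G →* Equiv.Perm 𝕊}

theorem IsOPHomeo.exists_eq_degreeOneMap {f : Equiv.Perm 𝕊} (hf : IsOPHomeo f) :
    ∃ F : CircleDeg1Lift, F 0 ∈ Icc (0 : ℝ) 1 ∧ f = degreeOneMap F := by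
  obtain ⟨u, hu⟩ := hf.exists_unit
  refine ⟨(translate (Multiplicative.ofAdd ((-⌊u 0⌋ : ℤ) : ℝ)) : CircleDeg1Liftˣ) * u,
    ?_, funext fun z => ?_⟩
  · simp [Int.floor_le, (Int.lt_floor_add_one _).le]
  · induction z using QuotientAddGroup.induction_on with | H x =>
    rw [hu, degreeOneMap_coe, CircleDeg1Lift.mul_apply, CircleDeg1Lift.translate_apply,
      coe_int_add]

theorem exists_tendsto_degreeOneMap_of_mem_closure (hρ : ∀ g, IsOPHomeo (ρ g)) {f : 𝕊 → 𝕊}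
    (hf : f ∈ closure (range fun g => ⇑(ρ g))) :
    ∃ (𝒰 : Ultrafilter G) (u : G → CircleDeg1Lift) (F : CircleDeg1Lift),
      (∀ g, ⇑(ρ g) = degreeOneMap (u g)) ∧ f = degreeOneMap F ∧
        ∀ x, Tendsto (fun g => u g x) 𝒰 (𝓝 (F x)) := by
  choose u hu₀ hu using fun g => (hρ g).exists_eq_degreeOneMap
  rw [mem_closure_iff_clusterPt, ← map_top] at hf
  obtain ⟨𝒰, -, h𝒰⟩ := mapClusterPt_iff_ultrafilter.1 hf
  obtain ⟨F, hF⟩ := exists_tendsto_ultrafilter 𝒰 hu₀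
  refine ⟨𝒰, u, F, hu, funext fun z => ?_, hF⟩
  induction z using QuotientAddGroup.induction_on with | H x =>
  refine tendsto_nhds_unique (tendsto_pi_nhds.1 h𝒰 x) ?_
  simp only [hu, degreeOneMap_coe]
  exact ((AddCircle.continuous_mk' _).tendsto _).comp (hF x)

theorem exists_collapses (hρ : ∀ g, IsOPHomeo (ρ g)) (hno : ¬ HasInvariantProbability ρ) :
    ∃ R A : Set 𝕊, R.Finite ∧ A.Finite ∧ A.Nonempty ∧ Collapses ρ R A := by
  obtain ⟨f, hf, hfin⟩ := exists_finite_range_mem_closure hρ hno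
  obtain ⟨𝒰, u, F, hu, rfl, hF⟩ := exists_tendsto_degreeOneMap_of_mem_closure hρ hf
  obtain ⟨R, hR, hRF⟩ := exists_finite_forall_exists_map_eq hfin
  refine ⟨R, _, hR, hfin, range_nonempty _, fun ε hε => ?_⟩
  refine (eventually_mapsTo_thickening_range hF Metric.isOpen_thickening.isClosed_compl.isCompact
    (fun z hz => hRF z fun hzR => hz (Metric.self_subset_thickening hε R hzR)) hε).exists.imp
    fun g hg => ?_
  rwa [hu]

end Collapses

section Orbits

open scoped Pointwise

variable {G X : Type*} [Group G] [MulAction G X]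

theorem exists_invariant_of_finite_orbit [MeasurableSpace X]
    (hmeas : ∀ g : G, Measurable fun x : X => g • x) {x : X} (hx : (MulAction.orbit G x).Finite) :
    ∃ μ : Measure X, IsProbabilityMeasure μ ∧ ∀ g : G, μ.map (g • ·) = μ := by
  have := hx.fintype
  let O := MulAction.orbit G x
  have : Nonempty O := ⟨x, MulAction.mem_orbit_self x⟩
  refine ⟨(Fintype.card O : ENNReal)⁻¹ • Measure.sum fun y : O => Measure.dirac (y : X),
    ⟨?_⟩, fun g => ?_⟩
  · simpa [O] using ENNReal.inv_mul_cancel (a := (Fintype.card O : ENNReal))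
      (by exact_mod_cast Fintype.card_ne_zero) (ENNReal.natCast_ne_top _)
  · rw [Measure.map_smul, Measure.map_sum (hmeas g).aemeasurable]
    simp only [Measure.map_dirac' (hmeas g)]
    congr 1
    exact Measure.sum_comp_equiv (MulAction.toPerm g : Equiv.Perm O)
      fun y : O => Measure.dirac (y : X)

/-- B. H. Neumann's lemma: otherwise finitely many cosets of the stabilizers of the points of `P`
cover `G`, so one of these stabilizers has finite index. -/
theorem exists_disjoint_smul (horb : ∀ x : X, (MulAction.orbit G x).Infinite) {P Q : Set X}
    (hP : P.Finite) (hQ : Q.Finite) : ∃ g : G, Disjoint (g • P) Q := by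
  by_contra! hmeet
  choose! c hc using fun (z : X × X) (hz : ∃ g : G, g • z.1 = z.2) => hz
  have hcover : ⋃ z ∈ (hP.prod hQ).toFinset,
      c z • (MulAction.stabilizer G z.1 : Set G) = univ := by
    refine eq_univ_of_forall fun g => ?_
    obtain ⟨_, ⟨p, hp, rfl⟩, hq⟩ := not_disjoint_iff.1 (hmeet g)
    refine mem_iUnion₂.2 ⟨(p, g • p), by simp [hp, hq], ?_⟩
    rw [mem_leftCoset_iff, SetLike.mem_coe, MulAction.mem_stabilizer_iff, mul_smul,
      inv_smul_eq_iff]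
    exact (hc (p, g • p) ⟨g, rfl⟩).symm
  obtain ⟨z, -, hz⟩ := Subgroup.exists_finiteIndex_of_leftCoset_cover hcover
  refine horb z.1 (finite_of_ncard_ne_zero ?_)
  rw [← MulAction.index_stabilizer]
  exact hz.index_ne_zero

end Orbits

section Schottky

open Metric (thickening self_subset_thickening thickening_mono isOpen_thickening)

variable {G X : Type*} [Group G]

/-- A Schottky system: the permutations `s i` map the complement of the `ε`-neighbourhood of
`R i` into the `ε`-neighbourhood of `A i`, all the sets involved being well separated. -/
structure IsSchottky {ι : Type*} [PseudoMetricSpace X] (s : ι → Equiv.Perm X) (R A : ι → Set X)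
    (ε : ℝ) : Prop where
  mapsTo i : MapsTo (s i) (thickening ε (R i))ᶜ (thickening ε (A i))
  disjoint_attractors : Pairwise fun i j => Disjoint (thickening (3 * ε) (A i))
    (thickening (3 * ε) (A j))
  disjoint_repellers : Pairwise fun i j => Disjoint (thickening (3 * ε) (R i))
    (thickening (3 * ε) (R j))
  disjoint i j : Disjoint (thickening (3 * ε) (A i)) (thickening (3 * ε) (R j))

theorem mapsTo_perm_inv_compl {f : Equiv.Perm X} {S T : Set X} (h : MapsTo f Sᶜ T) :
    MapsTo (f⁻¹ : Equiv.Perm X) Tᶜ S := fun x hx => by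
  by_contra hxS
  exact hx (by simpa using h hxS)

theorem IsSchottky.inv {ι : Type*} [PseudoMetricSpace X] {s : ι → Equiv.Perm X}
    {R A : ι → Set X} {ε : ℝ} (h : IsSchottky s R A ε) :
    IsSchottky (fun i => (s i)⁻¹) A R ε where
  mapsTo i := mapsTo_perm_inv_compl (h.mapsTo i)
  disjoint_attractors := h.disjoint_repellers
  disjoint_repellers := h.disjoint_attractors
  disjoint i j := (h.disjoint j i).symm

theorem eventually_disjoint_thickening [PseudoEMetricSpace X] {S T : Set X} (hS : IsCompact S)
    (hT : IsClosed T) (hST : Disjoint S T) {c : ℝ} (hc : 0 < c) :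
    ∀ᶠ ε in 𝓝[>] (0 : ℝ), Disjoint (thickening (c * ε) S) (thickening (c * ε) T) := by
  obtain ⟨δ, hδ, hdisj⟩ := hST.exists_thickenings hS hT
  filter_upwards [Ioo_mem_nhdsGT (div_pos hδ hc)] with ε hε
  have hle : c * ε ≤ δ := by rw [mul_comm]; exact ((lt_div_iff₀ hc).1 hε.2).le
  exact hdisj.mono (thickening_mono hle S) (thickening_mono hle T)

theorem exists_image_thickening_subset [PseudoMetricSpace X] {f : X → X}
    (hf : UniformContinuous f) {ε : ℝ} (hε : 0 < ε) :
    ∃ δ > 0, ∀ S : Set X, f '' thickening δ S ⊆ thickening ε (f '' S) := by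
  obtain ⟨δ, hδ, hfδ⟩ := Metric.uniformContinuous_iff.1 hf ε hε
  refine ⟨δ, hδ, fun S => ?_⟩
  rintro _ ⟨x, hx, rfl⟩
  obtain ⟨y, hy, hxy⟩ := Metric.mem_thickening_iff.1 hx
  exact Metric.mem_thickening_iff.2 ⟨f y, mem_image_of_mem f hy, hfδ hxy⟩

theorem exists_disjoint_image {ρ : G →* Equiv.Perm X}
    (horb : ∀ x, (range fun g => ρ g x).Infinite) {P Q : Set X} (hP : P.Finite) (hQ : Q.Finite) :
    ∃ g, Disjoint (ρ g '' P) Q :=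
  let := MulAction.compHom X ρ
  exists_disjoint_smul horb hP hQ

theorem exists_pairwise_disjoint_image {ρ : G →* Equiv.Perm X}
    (horb : ∀ x, (range fun g => ρ g x).Infinite) {P Q : Set X} (hP : P.Finite) (hQ : Q.Finite) :
    ∃ a b : Bool → G, (Pairwise fun i j => Disjoint (ρ (a i) '' P) (ρ (a j) '' P)) ∧
      (Pairwise fun i j => Disjoint (ρ (b i) '' Q) (ρ (b j) '' Q)) ∧
      ∀ i j, Disjoint (ρ (a i) '' P) (ρ (b j) '' Q) := by
  obtain ⟨k, hk⟩ := exists_disjoint_image horb hQ hP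
  obtain ⟨l, hl⟩ := exists_disjoint_image horb (hP.union (hQ.image (ρ k)))
    (hP.union (hQ.image (ρ k)))
  simp only [image_union, disjoint_union_left, disjoint_union_right] at hl
  obtain ⟨⟨hPP, hQP⟩, hPQ, hQQ⟩ := hl
  have hlk : ρ (l * k) '' Q = ρ l '' (ρ k '' Q) := by
    rw [map_mul, Equiv.Perm.coe_mul, image_comp]
  have hdiag : Disjoint (ρ l '' P) (ρ l '' (ρ k '' Q)) :=
    (disjoint_image_iff (ρ l).injective).2 hk.symm
  refine ⟨fun i => bif i then l else 1, fun i => bif i then l * k else k, ?_, ?_, ?_⟩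
  · rintro (_ | _) (_ | _) hij <;> simp_all [disjoint_comm]
  · rintro (_ | _) (_ | _) hij <;> simp_all [disjoint_comm]
  · rintro (_ | _) (_ | _) <;> simp_all [disjoint_comm]

section Compact

variable [MetricSpace X] [CompactSpace X] {ρ : G →* Equiv.Perm X} {R A : Set X}

theorem Collapses.image (hcont : ∀ g, Continuous (ρ g)) (h : Collapses ρ R A) (k l : G) :
    Collapses ρ (ρ k '' R) (ρ l '' A) := by
  intro ε hε
  obtain ⟨δ, hδ, hk⟩ := exists_image_thickening_subset
    (CompactSpace.uniformContinuous_of_continuous (hcont k)) hε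
  obtain ⟨η, hη, hl⟩ := exists_image_thickening_subset
    (CompactSpace.uniformContinuous_of_continuous (hcont l)) hε
  obtain ⟨g, hg⟩ := h (min δ η) (lt_min hδ hη)
  refine ⟨l * g * k⁻¹, fun x hx => ?_⟩
  have hx' : (ρ k)⁻¹ x ∉ thickening (min δ η) R := fun hmem =>
    hx (hk R ⟨_, thickening_mono (min_le_left _ _) R hmem, by simp⟩)
  simpa using hl A ⟨_, thickening_mono (min_le_right _ _) A (hg hx'), rfl⟩

theorem Collapses.exists_isSchottky (hcont : ∀ g, Continuous (ρ g))
    (horb : ∀ x, (range fun g => ρ g x).Infinite) (hR : R.Finite) (hA : A.Finite)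
    (hA' : A.Nonempty) (h : Collapses ρ R A) {δ : ℝ} (hδ : 0 < δ) :
    ∃ (s : Bool → G) (R' A' : Bool → Set X), ∃ ε ∈ Ioo 0 δ, (∀ i, (R' i).Finite) ∧
      (∀ i, (A' i).Finite ∧ (A' i).Nonempty) ∧ IsSchottky (fun i => ρ (s i)) R' A' ε := by
  obtain ⟨a, r, hAA, hRR, hAR⟩ := exists_pairwise_disjoint_image horb hA hR
  have hsep {S T : Set X} (hS : S.Finite) (hT : T.Finite) (hST : Disjoint S T) :=
    eventually_disjoint_thickening hS.isCompact hT.isClosed hST (zero_lt_three (α := ℝ))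
  have hAfin i := hA.image (ρ (a i))
  have hRfin i := hR.image (ρ (r i))
  have hev : ∀ᶠ ε in 𝓝[>] (0 : ℝ), ∀ i j,
      (i ≠ j → Disjoint (thickening (3 * ε) (ρ (a i) '' A)) (thickening (3 * ε) (ρ (a j) '' A))) ∧
      (i ≠ j → Disjoint (thickening (3 * ε) (ρ (r i) '' R)) (thickening (3 * ε) (ρ (r j) '' R))) ∧
      Disjoint (thickening (3 * ε) (ρ (a i) '' A)) (thickening (3 * ε) (ρ (r j) '' R)) := by
    simp only [eventually_all, eventually_and]
    exact fun i j => ⟨fun hij => hsep (hAfin i) (hAfin j) (hAA hij),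
      fun hij => hsep (hRfin i) (hRfin j) (hRR hij), hsep (hAfin i) (hRfin j) (hAR i j)⟩
  obtain ⟨ε, hdisj, hε⟩ := (hev.and (Ioo_mem_nhdsGT hδ)).exists
  choose s hs using fun i => h.image hcont (r i) (a i) ε hε.1
  exact ⟨s, _, _, ε, hε, hRfin, fun i => ⟨hAfin i, hA'.image _⟩, hs,
    fun i j hij => (hdisj i j).1 hij, fun i j hij => (hdisj i j).2.1 hij,
    fun i j => (hdisj i j).2.2⟩

end Compact

end Schottky

theorem infinite_orbit_of_not_hasInvariantProbability {G : Type*} [Group G]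
    {ρ : G →* Equiv.Perm 𝕊} (hρ : ∀ g, IsOPHomeo (ρ g)) (hno : ¬HasInvariantProbability ρ) (x : 𝕊) :
    (range fun g => ρ g x).Infinite := fun hx =>
  let := MulAction.compHom 𝕊 ρ
  hno (exists_invariant_of_finite_orbit (fun g => (hρ g).continuous.measurable) hx)

section Words

open scoped Finset

variable {ι : Type*}

section Fintype

variable [Fintype ι]

variable (ι) in
/-- The words of length `n` in the alphabet `ι`. -/
def words (n : ℕ) : Finset (List ι) :=
  (Finset.univ : Finset (Fin n → ι)).map ⟨List.ofFn, List.ofFn_injective⟩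

@[simp]
theorem mem_words {n : ℕ} {w : List ι} : w ∈ words ι n ↔ w.length = n := by
  simp only [words, Finset.mem_map, Finset.mem_univ, true_and]
  refine ⟨?_, ?_⟩
  · rintro ⟨f, rfl⟩
    exact List.length_ofFn
  · rintro rfl
    exact ⟨w.get, List.ofFn_get w⟩

theorem card_words (n : ℕ) : #(words ι n) = Fintype.card ι ^ n := by
  simp [words]

open scoped Classical in
variable (ι) in
/-- The filter of sets of words of asymptotic density one, that is, whose complement contains a
proportion of the words of length `n` which tends to zero. -/
def densityOne : Filter (List ι) :=
  comk (fun T => Tendsto (fun n => #{w ∈ words ι n | w ∈ T} / (Fintype.card ι : ℝ) ^ n) atTop (𝓝 0))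
    (by simp)
    (fun T hT S hST => squeeze_zero (fun n => by positivity) (fun n => by gcongr) hT)
    (fun S hS T hT => by
      have hST := hS.add hT
      rw [add_zero] at hST
      refine squeeze_zero (fun n => by positivity) (fun n => ?_) hST
      rw [← add_div]
      gcongr
      simp only [mem_union, Finset.filter_or]
      exact_mod_cast Finset.card_union_le _ _)

theorem eventually_densityOne {p : List ι → Prop} [DecidablePred p] :
    (∀ᶠ w in densityOne ι, p w) ↔
      Tendsto (fun n => #{w ∈ words ι n | ¬p w} / (Fintype.card ι : ℝ) ^ n) atTop (𝓝 0) := by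
  simp only [Filter.Eventually, densityOne, mem_comk, mem_compl_iff, mem_ofPred_eq]

theorem eventually_le_length_densityOne (n : ℕ) : ∀ᶠ w in densityOne ι, n ≤ w.length := by
  refine eventually_densityOne.2 (tendsto_const_nhds.congr' ?_)
  filter_upwards [eventually_ge_atTop n] with m hm
  have hempty : ∀ w ∈ words ι m, ¬¬n ≤ w.length := fun w hw => by
    rwa [mem_words.1 hw, not_not]
  simp only [Finset.filter_false_of_mem hempty, Finset.card_empty, Nat.cast_zero, zero_div]

instance [Nonempty ι] : (densityOne ι).NeBot := by
  refine ⟨fun h => ?_⟩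
  have hzero := eventually_densityOne.1 (h ▸ eventually_bot : ∀ᶠ _ in densityOne ι, False)
  simp [card_words, tendsto_const_nhds_iff] at hzero

theorem tendsto_reverse_densityOne : Tendsto List.reverse (densityOne ι) (densityOne ι) := by
  classical
  intro T hT
  have hT' : ∀ᶠ w in densityOne ι, w ∈ T := hT
  suffices ∀ᶠ w in densityOne ι, w.reverse ∈ T from this
  refine eventually_densityOne.2 ((eventually_densityOne.1 hT').congr fun n => ?_)
  rw [Finset.card_nbij' List.reverse List.reverse] <;> simp +contextual [MapsTo, LeftInvOn]

end Fintype

/-- All suffixes `u` of the word `w` satisfy `ℓ u ≤ K (2/3)^|u|`; here `ℓ u` stands for the length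
of the image of a fixed interval under the map spelled by `u`. -/
def IsTame (ℓ : List ι → ℝ) (K : ℝ) (w : List ι) : Prop :=
  ∀ u, u <:+ w → ℓ u ≤ K * (2 / 3) ^ u.length

theorem isTame_cons {ℓ : List ι → ℝ} {K : ℝ} {i : ι} {w : List ι} :
    IsTame ℓ K (i :: w) ↔ ℓ (i :: w) ≤ K * (2 / 3) ^ (w.length + 1) ∧ IsTame ℓ K w := by
  simp [IsTame, List.suffix_cons_iff, or_imp, forall_and]

variable [Fintype ι] {ℓ : List ι → ℝ} {K : ℝ}

open scoped Classical in
theorem card_filter_lt_le (h_nonneg : ∀ w, 0 ≤ ℓ w) {n : ℕ} (h_sum : ∑ w ∈ words ι n, ℓ w ≤ 1)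
    (hK : 0 < K) : (#{w ∈ words ι n | K * (2 / 3) ^ n < ℓ w} : ℝ) ≤ (3 / 2) ^ n / K := by
  have h : #{w ∈ words ι n | K * (2 / 3) ^ n < ℓ w} • (K * (2 / 3) ^ n) ≤ 1 :=
    (Finset.card_nsmul_le_sum _ _ _ fun w hw => (Finset.mem_filter.1 hw).2.le).trans
      ((Finset.sum_le_sum_of_subset_of_nonneg (Finset.filter_subset _ _)
        fun w _ _ => h_nonneg w).trans h_sum)
  rw [nsmul_eq_mul, ← le_div_iff₀ (by positivity)] at h
  exact h.trans_eq (by rw [← inv_div 3 2, inv_pow]; field_simp)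

open scoped Classical in
theorem card_filter_not_isTame_succ_le (n : ℕ) :
    #{w ∈ words ι (n + 1) | ¬IsTame ℓ K w} ≤ Fintype.card ι * #{w ∈ words ι n | ¬IsTame ℓ K w} +
      #{w ∈ words ι (n + 1) | K * (2 / 3) ^ (n + 1) < ℓ w} := by
  let bad : Finset (List ι) := {w ∈ words ι n | ¬IsTame ℓ K w}
  have hsub : ({w ∈ words ι (n + 1) | ¬IsTame ℓ K w} : Finset (List ι)) ⊆
      (Finset.univ ×ˢ bad).image (fun p => p.1 :: p.2) ∪
        ({w ∈ words ι (n + 1) | K * (2 / 3) ^ (n + 1) < ℓ w} : Finset (List ι)) := by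
    rintro (_ | ⟨i, w⟩) hw
    · simp at hw
    · obtain ⟨hlen, hbad⟩ : w.length = n ∧ ¬IsTame ℓ K (i :: w) := by simpa using hw
      rw [isTame_cons, not_and_or, not_le, hlen] at hbad
      simpa [bad, hlen, or_comm] using hbad
  refine (Finset.card_le_card hsub).trans ((Finset.card_union_le _ _).trans ?_)
  gcongr
  exact Finset.card_image_le.trans_eq (by simp [bad])

open scoped Classical in
theorem card_filter_not_isTame_le (hι : 2 ≤ Fintype.card ι) (h_nonneg : ∀ w, 0 ≤ ℓ w)
    (h_sum : ∀ n, ∑ w ∈ words ι n, ℓ w ≤ 1) (hK : 0 < K) (n : ℕ) :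
    #{w ∈ words ι n | ¬IsTame ℓ K w} / (Fintype.card ι : ℝ) ^ n ≤
      4 / K * (1 - (3 / 4) ^ (n + 1)) := by
  have hd : (2 : ℝ) ≤ Fintype.card ι := mod_cast hι
  induction n with
  | zero =>
    have hsub : ({w ∈ words ι 0 | ¬IsTame ℓ K w} : Finset (List ι)) ⊆
        ({w ∈ words ι 0 | K * (2 / 3) ^ 0 < ℓ w} : Finset (List ι)) := by
      simp +contextual [Finset.subset_iff, IsTame]
    have h := (Nat.cast_le (α := ℝ).2 (Finset.card_le_card hsub)).trans
      (card_filter_lt_le h_nonneg (h_sum 0) hK)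
    rw [pow_zero, div_one]
    exact h.trans_eq (by ring)
  | succ n ih =>
    set d : ℝ := (Fintype.card ι : ℝ)
    calc #{w ∈ words ι (n + 1) | ¬IsTame ℓ K w} / d ^ (n + 1)
        ≤ (d * #{w ∈ words ι n | ¬IsTame ℓ K w} + (3 / 2) ^ (n + 1) / K) / d ^ (n + 1) := by
          gcongr
          refine (Nat.cast_le (α := ℝ).2 (card_filter_not_isTame_succ_le n)).trans ?_
          push_cast
          gcongr
          exact card_filter_lt_le h_nonneg (h_sum (n + 1)) hK
      _ = #{w ∈ words ι n | ¬IsTame ℓ K w} / d ^ n + ((3 / 2) / d) ^ (n + 1) / K := by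
          rw [div_pow _ d, pow_succ d]; field_simp
      _ ≤ 4 / K * (1 - (3 / 4) ^ (n + 1)) + (3 / 4) ^ (n + 1) / K := by
          gcongr ?_ + ?_ ^ _ / _
          rw [div_le_iff₀ (by positivity)]
          linarith
      _ = 4 / K * (1 - (3 / 4) ^ (n + 1 + 1)) := by ring

theorem eventually_densityOne_of_isTame (hι : 2 ≤ Fintype.card ι) (h_nonneg : ∀ w, 0 ≤ ℓ w)
    (h_sum : ∀ n, ∑ w ∈ words ι n, ℓ w ≤ 1) {p : List ι → Prop}
    (h : ∀ K, ∃ N : ℕ, ∀ w, N ≤ w.length → IsTame ℓ K w → p w) : ∀ᶠ w in densityOne ι, p w := by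
  classical
  have : (0 : ℝ) < Fintype.card ι := mod_cast zero_lt_two.trans_le hι
  refine eventually_densityOne.2 (tendsto_order.2 ⟨fun a ha => .of_forall fun n => ha.trans_le
    (by positivity), fun κ hκ => ?_⟩)
  obtain ⟨N, hN⟩ := h (4 / κ)
  filter_upwards [eventually_ge_atTop N] with n hn
  calc (#{w ∈ words ι n | ¬p w} : ℝ) / Fintype.card ι ^ n
      ≤ #{w ∈ words ι n | ¬IsTame ℓ (4 / κ) w} / Fintype.card ι ^ n := by
        gcongr with w hw
        exact hN w (hn.trans_eq (mem_words.1 hw).symm)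
    _ ≤ 4 / (4 / κ) * (1 - (3 / 4) ^ (n + 1)) :=
        card_filter_not_isTame_le hι h_nonneg h_sum (by positivity) n
    _ = κ * (1 - (3 / 4) ^ (n + 1)) := by rw [div_div_cancel₀ four_ne_zero]
    _ < κ := mul_lt_of_lt_one_right hκ (sub_lt_self _ (by positivity))

end Words

section WordAction

variable {ι X : Type*} {s : ι → Equiv.Perm X} {D : Set X}

theorem mapsTo_prod_map (h : ∀ i, MapsTo (s i) D D) (w : List ι) : MapsTo (w.map s).prod D D := by
  induction w with
  | nil => exact mapsTo_id D
  | cons i w ih => simpa using (h i).comp ih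

theorem pairwiseDisjoint_image_words [Fintype ι] (h : ∀ i, MapsTo (s i) D D)
    (hdisj : Pairwise fun i j => Disjoint (s i '' D) (s j '' D)) (n : ℕ) :
    (words ι n : Set (List ι)).PairwiseDisjoint fun w => (w.map s).prod '' D := by
  induction n with
  | zero =>
    intro u hu v hv huv
    simp_all
  | succ n ih =>
    rintro (_ | ⟨i, u⟩) hu (_ | ⟨j, v⟩) hv huv
    · exact absurd rfl huv
    · simp at hu
    · simp at hv
    · simp only [Function.onFun, List.map_cons, List.prod_cons, Equiv.Perm.coe_mul, image_comp]
      obtain rfl | hij := eq_or_ne i j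
      · exact (disjoint_image_iff (s i).injective).2
          (ih (by simpa using hu) (by simpa using hv) (by simpa using huv))
      · exact (hdisj hij).mono (image_mono (mapsTo_prod_map h u).image_subset)
          (image_mono (mapsTo_prod_map h v).image_subset)

end WordAction

section WordLifts

open Metric (closedBall)

variable {ι : Type*} {s : ι → Equiv.Perm 𝕊} {F : ι → ℝ → ℝ} {f g : Equiv.Perm 𝕊} {Φ Ψ : ℝ → ℝ}

theorem coe_image_Icc_sub_add (c r : ℝ) :
    ((↑) : ℝ → 𝕊) '' Icc (c - r) (c + r) = closedBall (c : 𝕊) r := by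
  refine Subset.antisymm ?_ fun p hp => ?_
  · rintro _ ⟨t, ht, rfl⟩
    exact (dist_coe_le t c).trans (abs_le.2 ⟨by linarith [ht.1], by linarith [ht.2]⟩)
  · obtain ⟨t, rfl⟩ := QuotientAddGroup.mk_surjective p
    have ht : |t - c - round (t - c)| ≤ r := by
      rwa [Metric.mem_closedBall, dist_eq_norm, ← AddCircle.coe_sub, UnitAddCircle.norm_eq] at hp
    rw [abs_le] at ht
    refine ⟨((-round (t - c) : ℤ) : ℝ) + t, ?_, coe_int_add _ _⟩
    push_cast
    constructor <;> linarith

theorem dist_coe_eq {x y : ℝ} (h : |x - y| ≤ 1 / 2) : dist (x : 𝕊) y = |x - y| := by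
  rw [dist_eq_norm, ← AddCircle.coe_sub, AddCircle.norm_coe_eq_abs_iff _ one_ne_zero]
  simpa using h

theorem IsOPLift.volume_image_closedBall (h : IsOPLift f Φ) (c : ℝ) {r : ℝ} (hr : 0 ≤ r)
    (hr' : r ≤ 1 / 2) :
    volume (f '' closedBall (c : 𝕊) r) = ENNReal.ofReal (Φ (c + r) - Φ (c - r)) := by
  obtain ⟨hcont, hmono, hadd, hlift⟩ := h
  have : Φ (c - r) ≤ Φ (c + r) := hmono.monotone (by linarith)
  have hle' : Φ (c + r) ≤ Φ (c - r) + 1 := hadd (c - r) ▸ hmono.monotone (by linarith)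
  set m := (Φ (c - r) + Φ (c + r)) / 2
  set l := (Φ (c + r) - Φ (c - r)) / 2 with hl
  have himage : f '' closedBall (c : 𝕊) r = closedBall (m : 𝕊) l := by
    rw [← coe_image_Icc_sub_add, ← coe_image_Icc_sub_add, image_image,
      show m - l = Φ (c - r) by ring, show m + l = Φ (c + r) by ring,
      ← hcont.continuousOn.image_Icc_of_monotoneOn (by linarith) (hmono.monotone.monotoneOn _),
      image_image]
    simp only [hlift]
  rw [himage, AddCircle.volume_closedBall, min_eq_right (by linarith)]
  congr 1
  ring

theorem IsC1Lift.id : IsC1Lift 1 id :=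
  ⟨⟨continuous_id, strictMono_id, fun _ => rfl, fun _ => rfl⟩, contDiff_id, by simp⟩

theorem IsC1Lift.differentiable (h : IsC1Lift f Φ) : Differentiable ℝ Φ :=
  h.2.1.differentiable one_ne_zero

theorem IsC1Lift.comp (hf : IsC1Lift f Φ) (hg : IsC1Lift g Ψ) : IsC1Lift (f * g) (Φ ∘ Ψ) := by
  refine ⟨⟨hf.1.1.comp hg.1.1, hf.1.2.1.comp hg.1.2.1, fun x => ?_, fun x => ?_⟩,
    hf.2.1.comp hg.2.1, fun x => ?_⟩
  · simp [hg.1.2.2.1, hf.1.2.2.1]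
  · simp [hg.1.2.2.2, hf.1.2.2.2]
  · rw [deriv_comp x (hf.differentiable _) (hg.differentiable _)]
    exact mul_ne_zero (hf.2.2 _) (hg.2.2 _)

theorem IsC1Lift.deriv_pos (h : IsC1Lift f Φ) (x : ℝ) : 0 < deriv Φ x :=
  h.1.2.1.monotone.deriv_nonneg.lt_of_ne' (h.2.2 x)

theorem IsC1Lift.periodic_deriv (h : IsC1Lift f Φ) : Function.Periodic (deriv Φ) 1 := fun x => by
  rw [← deriv_comp_add_const, funext h.1.2.2.1, deriv_add_const]

/-- The lift of the word `w` in the circle maps `s i`, given lifts `F i` of the letters. -/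
def wordLift (F : ι → ℝ → ℝ) : List ι → ℝ → ℝ
  | [] => id
  | i :: w => F i ∘ wordLift F w

theorem isC1Lift_wordLift (hF : ∀ i, IsC1Lift (s i) (F i)) (w : List ι) :
    IsC1Lift (w.map s).prod (wordLift F w) := by
  induction w with
  | nil => exact IsC1Lift.id
  | cons i w ih =>
    rw [List.map_cons, List.prod_cons]
    exact (hF i).comp ih

theorem deriv_wordLift_cons (hF : ∀ i, IsC1Lift (s i) (F i)) (i : ι) (w : List ι) (x : ℝ) :
    deriv (wordLift F (i :: w)) x = deriv (F i) (wordLift F w x) * deriv (wordLift F w) x :=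
  deriv_comp x ((hF i).differentiable _) ((isC1Lift_wordLift hF w).differentiable _)

theorem sum_wordLift_sub_le_one [Fintype ι] (hF : ∀ i, IsC1Lift (s i) (F i)) {D : Set 𝕊}
    (hD : ∀ i, MapsTo (s i) D D) (hdisj : Pairwise fun i j => Disjoint (s i '' D) (s j '' D))
    {c r : ℝ} (hr : 0 ≤ r) (hr' : r ≤ 1 / 2) (hcr : closedBall (c : 𝕊) r ⊆ D) (n : ℕ) :
    ∑ w ∈ words ι n, (wordLift F w (c + r) - wordLift F w (c - r)) ≤ 1 := by
  have hlift := isC1Lift_wordLift hF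
  have hmeas (w : List ι) : MeasurableSet ((w.map s).prod '' closedBall (c : 𝕊) r) :=
    ((isCompact_closedBall _ _).image
      (IsOPHomeo.continuous ⟨_, (hlift w).1⟩)).isClosed.measurableSet
  rw [← ENNReal.ofReal_le_ofReal_iff zero_le_one, ENNReal.ofReal_sum_of_nonneg fun w _ =>
    sub_nonneg.2 ((hlift w).1.2.1.monotone (by linarith))]
  calc ∑ w ∈ words ι n, ENNReal.ofReal (wordLift F w (c + r) - wordLift F w (c - r))
      = ∑ w ∈ words ι n, volume ((w.map s).prod '' closedBall (c : 𝕊) r) :=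
        Finset.sum_congr rfl fun w _ => ((hlift w).1.volume_image_closedBall c hr hr').symm
    _ = volume (⋃ w ∈ words ι n, (w.map s).prod '' closedBall (c : 𝕊) r) :=
        (measure_biUnion_finset ((pairwiseDisjoint_image_words hD hdisj n).mono_on
          fun w _ => image_mono hcr) fun w _ => hmeas w).symm
    _ ≤ ENNReal.ofReal 1 := (measure_mono (subset_univ _)).trans_eq (AddCircle.measure_univ _)

theorem exists_dist_le_add_mul_dist {X Y : Type*} [PseudoMetricSpace X] [CompactSpace X]
    [PseudoMetricSpace Y] {φ : X → Y} (hφ : Continuous φ) {η : ℝ} (hη : 0 < η) :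
    ∃ L, 0 ≤ L ∧ ∀ x y, dist (φ x) (φ y) ≤ η + L * dist x y := by
  obtain ⟨δ, hδ, hclose⟩ := Metric.uniformContinuous_iff.1
    (CompactSpace.uniformContinuous_of_continuous hφ) η hη
  obtain ⟨C, hC⟩ := Metric.isBounded_iff.1 (isCompact_range hφ).isBounded
  have hC' x y : dist (φ x) (φ y) ≤ |C| :=
    (hC (mem_range_self x) (mem_range_self y)).trans (le_abs_self C)
  refine ⟨|C| / δ, by positivity, fun x y => ?_⟩
  obtain h | h := lt_or_ge (dist x y) δ
  · exact (hclose h).le.trans (le_add_of_nonneg_right (by positivity))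
  · calc dist (φ x) (φ y) ≤ |C| / δ * δ := by rw [div_mul_cancel₀ _ hδ.ne']; exact hC' x y
      _ ≤ |C| / δ * dist x y := by gcongr
      _ ≤ η + |C| / δ * dist x y := le_add_of_nonneg_left hη.le

theorem IsC1Lift.exists_abs_log_deriv_sub_le (h : IsC1Lift f Φ) {η : ℝ} (hη : 0 < η) :
    ∃ L, 0 ≤ L ∧ ∀ x y, |Real.log (deriv Φ x) - Real.log (deriv Φ y)| ≤ η + L * |x - y| := by
  have hper : Function.Periodic (fun x => Real.log (deriv Φ x)) 1 := fun x =>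
    congrArg Real.log (h.periodic_deriv x)
  have hcont : Continuous (hper.lift : 𝕊 → ℝ) :=
    QuotientAddGroup.isOpenQuotientMap_mk.isQuotientMap.continuous_iff.2
      ((h.2.1.continuous_deriv le_rfl).log h.2.2)
  obtain ⟨L, hL, hdist⟩ := exists_dist_le_add_mul_dist hcont hη
  refine ⟨L, hL, fun x y => (hdist (x : 𝕊) y).trans ?_⟩
  gcongr
  exact dist_coe_le x y

variable {L η K a b : ℝ}

theorem IsTame.abs_log_deriv_wordLift_sub_le (hF : ∀ i, IsC1Lift (s i) (F i)) (hL : 0 ≤ L)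
    (hlog : ∀ i x y, |Real.log (deriv (F i) x) - Real.log (deriv (F i) y)| ≤ η + L * |x - y|)
    {x y : ℝ} (hx : x ∈ Icc a b) (hy : y ∈ Icc a b) {w : List ι}
    (hw : IsTame (fun u => wordLift F u b - wordLift F u a) K w) :
    |Real.log (deriv (wordLift F w) x) - Real.log (deriv (wordLift F w) y)| ≤
      w.length * η + 3 * L * K * (1 - (2 / 3) ^ w.length) := by
  induction w with
  | nil => simp [wordLift]
  | cons i w ih =>
    have htail := (isTame_cons.1 hw).2
    have hmono := (isC1Lift_wordLift hF w).1.2.1.monotone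
    have hclose : |wordLift F w x - wordLift F w y| ≤ K * (2 / 3) ^ w.length :=
      (Real.dist_le_of_mem_Icc ⟨hmono hx.1, hmono hx.2⟩ ⟨hmono hy.1, hmono hy.2⟩).trans
        (htail w List.suffix_rfl)
    have hpos := (isC1Lift_wordLift hF w).deriv_pos
    rw [deriv_wordLift_cons hF, deriv_wordLift_cons hF,
      Real.log_mul ((hF i).2.2 _) (hpos x).ne', Real.log_mul ((hF i).2.2 _) (hpos y).ne',
      add_sub_add_comm]
    calc _ ≤ _ := abs_add_le _ _
      _ ≤ (η + L * (K * (2 / 3) ^ w.length)) +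
          (w.length * η + 3 * L * K * (1 - (2 / 3) ^ w.length)) := by
        gcongr
        · exact (hlog i _ _).trans (by gcongr)
        · exact ih htail
      _ = _ := by push_cast [List.length_cons]; ring

/-- Some point of `[a, b]` has derivative the slope of `wordLift F w`, at most
`K (2/3)^|w| / (b - a)`, and the distortion costs a factor `(5/4)^|w| exp (3LK)`. -/
theorem IsTame.deriv_wordLift_le (hF : ∀ i, IsC1Lift (s i) (F i)) (hL : 0 ≤ L)
    (hlog : ∀ i x y,
      |Real.log (deriv (F i) x) - Real.log (deriv (F i) y)| ≤ Real.log (5 / 4) + L * |x - y|)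
    (hab : a < b) {x : ℝ} (hx : x ∈ Icc a b) {w : List ι}
    (hw : IsTame (fun u => wordLift F u b - wordLift F u a) K w) :
    deriv (wordLift F w) x ≤ Real.exp (3 * L * K) * (K / (b - a)) * (5 / 6) ^ w.length := by
  have hlift := isC1Lift_wordLift hF w
  have hlen : wordLift F w b - wordLift F w a ≤ K * (2 / 3) ^ w.length := hw w List.suffix_rfl
  have hK : 0 ≤ K := nonneg_of_mul_nonneg_left
    ((sub_nonneg.2 (hlift.1.2.1.monotone hab.le)).trans hlen) (by positivity)
  obtain ⟨y, hy, hslope⟩ := exists_deriv_eq_slope (wordLift F w) hab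
    hlift.1.1.continuousOn hlift.differentiable.differentiableOn
  have hdist := (abs_le.1 (hw.abs_log_deriv_wordLift_sub_le hF hL hlog hx
    (Ioo_subset_Icc_self hy))).2
  have hdist' : Real.log (deriv (wordLift F w) x) ≤
      w.length * Real.log (5 / 4) + 3 * L * K + Real.log (deriv (wordLift F w) y) := by
    have : 0 ≤ 3 * L * K * (2 / 3) ^ w.length := by positivity
    linarith
  calc deriv (wordLift F w) x
      ≤ Real.exp (w.length * Real.log (5 / 4) + 3 * L * K + Real.log (deriv (wordLift F w) y)) :=
        (Real.log_le_iff_le_exp (hlift.deriv_pos x)).1 hdist'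
    _ = (5 / 4) ^ w.length * Real.exp (3 * L * K) * deriv (wordLift F w) y := by
        rw [Real.exp_add, Real.exp_add, Real.exp_log (hlift.deriv_pos y), Real.exp_nat_mul,
          Real.exp_log (by norm_num)]
    _ ≤ (5 / 4) ^ w.length * Real.exp (3 * L * K) * (K * (2 / 3) ^ w.length / (b - a)) := by
        rw [hslope]
        gcongr
    _ = Real.exp (3 * L * K) * (K / (b - a)) * (5 / 6) ^ w.length := by
        rw [show (5 / 6 : ℝ) = 5 / 4 * (2 / 3) by norm_num, mul_pow]
        ring

theorem IsC1Lift.lipschitzOnWith_closedBall (h : IsC1Lift f Φ) {c r : ℝ} (hr : r ≤ 1 / 4)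
    {C : NNReal} (hC : ∀ x ∈ Icc (c - r) (c + r), deriv Φ x ≤ C) :
    LipschitzOnWith C f (closedBall (c : 𝕊) r) := by
  rw [← coe_image_Icc_sub_add]
  refine LipschitzOnWith.of_dist_le_mul ?_
  rintro _ ⟨x, hx, rfl⟩ _ ⟨y, hy, rfl⟩
  have hxy : |x - y| ≤ 1 / 2 := (Real.dist_le_of_mem_Icc hx hy).trans (by linarith)
  rw [h.1.2.2.2, h.1.2.2.2, dist_coe_eq hxy]
  refine (dist_coe_le _ _).trans ?_
  refine (convex_Icc _ _).norm_image_sub_le_of_norm_deriv_le (fun z _ => h.differentiable z)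
    (fun z hz => ?_) hy hx
  rw [Real.norm_of_nonneg (h.deriv_pos z).le]
  exact hC z hz

/-- The images of a ball under the words of length `n` are disjoint, so most of these words,
along with all their suffixes, contract it exponentially; bounded distortion turns this into a bound
on the derivative. -/
theorem eventually_lipschitzOnWith_prod_map [Fintype ι] (hι : 2 ≤ Fintype.card ι)
    (hs : ∀ i, IsC1Diffeo (s i)) {D : Set 𝕊} (hD : ∀ i, MapsTo (s i) D D)
    (hdisj : Pairwise fun i j => Disjoint (s i '' D) (s j '' D)) (p : 𝕊) {r : ℝ} (hr : 0 < r)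
    (hr' : r ≤ 1 / 4) (hp : closedBall p r ⊆ D) {C : NNReal} (hC : 0 < C) :
    ∀ᶠ w in densityOne ι, LipschitzOnWith C (w.map s).prod (closedBall p r) := by
  choose F hF using hs
  obtain ⟨c, rfl⟩ := QuotientAddGroup.mk_surjective p
  choose M hM hlog using fun i =>
    (hF i).exists_abs_log_deriv_sub_le (Real.log_pos (by norm_num : (1 : ℝ) < 5 / 4))
  have hlog' i x y : |Real.log (deriv (F i) x) - Real.log (deriv (F i) y)| ≤
      Real.log (5 / 4) + (∑ j, M j) * |x - y| := (hlog i x y).trans (by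
    gcongr
    exact Finset.single_le_sum (fun j _ => hM j) (Finset.mem_univ i))
  refine eventually_densityOne_of_isTame hι
    (fun w => sub_nonneg.2 ((isC1Lift_wordLift hF w).1.2.1.monotone (by linarith)))
    (sum_wordLift_sub_le_one hF hD hdisj hr.le (by linarith) hp) fun K => ?_
  set B := Real.exp (3 * (∑ j, M j) * K) * (K / (c + r - (c - r)))
  have hlim : Tendsto (fun n : ℕ => B * (5 / 6) ^ n) atTop (𝓝 0) := by
    simpa using (tendsto_pow_atTop_nhds_zero_of_lt_one (r := (5 / 6 : ℝ)) (by norm_num)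
      (by norm_num)).const_mul B
  obtain ⟨N, hN⟩ := eventually_atTop.1 (hlim.eventually_le_const (NNReal.coe_pos.2 hC))
  refine ⟨N, fun w hw htame => (isC1Lift_wordLift hF w).lipschitzOnWith_closedBall hr'
    fun x hx => ?_⟩
  exact (htame.deriv_wordLift_le hF (Finset.sum_nonneg fun i _ => hM i) hlog' (by linarith)
    hx).trans (hN _ hw)

end WordLifts

section Attracting

open Metric (closedBall ball thickening)

variable {X : Type*}

/-- North–south dynamics: `f` maps the complement of the `ε`-neighbourhood of `W` into the
`ε`-neighbourhood of `U`, near the points of which it is a contraction. -/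
structure IsAttracting [PseudoMetricSpace X] (f : X → X) (U W : Set X) (ε : ℝ) : Prop where
  mapsTo : MapsTo f (thickening ε W)ᶜ (thickening ε U)
  disjoint : Disjoint (thickening ε U) (thickening ε W)
  lipschitzOnWith a : a ∈ U → LipschitzOnWith 4⁻¹ f (closedBall a (2 * ε))

section PseudoMetricSpace

variable [PseudoMetricSpace X] {f g : X → X} {U W : Set X} {ε : ℝ}

theorem mapsTo_closedBall_of_lipschitzOnWith {a b x : X}
    (hf : LipschitzOnWith 4⁻¹ f (closedBall a (2 * ε))) (hx : x ∈ ball a ε) (hfx : f x ∈ ball b ε) :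
    MapsTo f (closedBall a (2 * ε)) (closedBall b (2 * ε)) := fun y hy => by
  rw [Metric.mem_ball] at hx hfx
  rw [Metric.mem_closedBall] at hy ⊢
  have hε : 0 ≤ ε := dist_nonneg.trans hx.le
  have hdist : dist (f y) (f x) ≤ 4⁻¹ * dist y x := by
    simpa using hf.dist_le_mul y hy x (Metric.mem_closedBall.2 (by linarith))
  linarith [dist_triangle (f y) (f x) b, dist_triangle_right y x a]

theorem IsAttracting.exists_mapsTo_closedBall (h : IsAttracting f U W ε) (hε : 0 < ε) {a : X}
    (ha : a ∈ U) : ∃ b ∈ U, MapsTo f (closedBall a (2 * ε)) (closedBall b (2 * ε)) := by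
  have ha' : a ∈ thickening ε U := Metric.self_subset_thickening hε U ha
  obtain ⟨b, hb, hfa⟩ := Metric.mem_thickening_iff.1 (h.mapsTo (h.disjoint.notMem_of_mem_left ha'))
  exact ⟨b, hb, mapsTo_closedBall_of_lipschitzOnWith (h.lipschitzOnWith a ha)
    (Metric.mem_ball_self hε) hfa⟩

theorem IsAttracting.comp (hf : IsAttracting f U W ε) (hg : IsAttracting g U W ε) (hε : 0 < ε) :
    IsAttracting (f ∘ g) U W ε where
  mapsTo := hf.mapsTo.comp (hg.mapsTo.mono_right hg.disjoint.subset_compl_right)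
  disjoint := hf.disjoint
  lipschitzOnWith a ha := by
    obtain ⟨b, hb, hmaps⟩ := hg.exists_mapsTo_closedBall hε ha
    refine ((hf.lipschitzOnWith b hb).comp (hg.lipschitzOnWith a ha) hmaps).weaken ?_
    exact mul_le_of_le_one_left' (inv_le_one_of_one_le₀ (by norm_num))

theorem IsAttracting.iterate (h : IsAttracting f U W ε) (hε : 0 < ε) {k : ℕ} (hk : k ≠ 0) :
    IsAttracting f^[k] U W ε := by
  obtain ⟨k, rfl⟩ := Nat.exists_eq_succ_of_ne_zero hk
  clear hk
  induction k with
  | zero => exact h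
  | succ k ih => exact ih.comp h hε

theorem IsAttracting.exists_mem_nhds_lipschitzOnWith (h : IsAttracting f U W ε) {x : X}
    (hx : x ∈ thickening ε U) : ∃ V ∈ 𝓝 x, LipschitzOnWith 4⁻¹ f V := by
  obtain ⟨a, ha, hxa⟩ := Metric.mem_thickening_iff.1 hx
  refine ⟨closedBall a (2 * ε), Metric.closedBall_mem_nhds_of_mem ?_, h.lipschitzOnWith a ha⟩
  exact Metric.ball_subset_ball (by linarith [dist_nonneg (x := x) (y := a)]) hxa

theorem IsAttracting.mem_thickening_or_mem_thickening (h : IsAttracting f U W ε) {x : X}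
    (hx : f x = x) : x ∈ thickening ε U ∨ x ∈ thickening ε W :=
  or_iff_not_imp_right.2 fun hxW => hx ▸ h.mapsTo hxW

end PseudoMetricSpace

variable [MetricSpace X] {U W : Set X} {ε : ℝ}

theorem IsAttracting.exists_iterate_eq [CompleteSpace X] {f : X → X} (h : IsAttracting f U W ε)
    (hε : 0 < ε) (hU : U.Finite) (hne : U.Nonempty) : ∃ k ≠ 0, ∃ x, f^[k] x = x := by
  obtain ⟨x, hx⟩ := hne
  have hmem n : ∃ a ∈ U, f^[n] x ∈ ball a ε := by
    refine Metric.mem_thickening_iff.1 (MapsTo.iterate ?_ n (Metric.self_subset_thickening hε U hx))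
    exact h.mapsTo.mono_left h.disjoint.subset_compl_right
  choose a haU ha using hmem
  obtain ⟨m, n, hmn, hmn'⟩ := hU.exists_lt_map_eq_of_forall_mem haU
  obtain ⟨k, rfl⟩ := Nat.exists_eq_add_of_lt hmn
  have hlip := (h.iterate hε k.succ_ne_zero).lipschitzOnWith (a m) (haU m)
  have hmaps : MapsTo f^[k + 1] (closedBall (a m) (2 * ε)) (closedBall (a m) (2 * ε)) := by
    refine mapsTo_closedBall_of_lipschitzOnWith hlip (ha m) ?_
    rw [← Function.iterate_add_apply, hmn', show k + 1 + m = m + k + 1 by ring]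
    exact ha _
  obtain ⟨y, -, hy, -⟩ := ContractingWith.exists_fixedPoint' Metric.isClosed_closedBall.isComplete
    hmaps ⟨by norm_num, hlip.mapsToRestrict hmaps⟩
    (Metric.mem_closedBall_self (by positivity)) (edist_ne_top _ _)
  exact ⟨k + 1, k.succ_ne_zero, y, hy⟩

theorem subsingleton_fixedPoints_inter_of_lipschitzOnWith {f : X → X} {K : NNReal} {S : Set X}
    (h : LipschitzOnWith K f S) (hK : K < 1) : (Function.fixedPoints f ∩ S).Subsingleton := by
  rintro x ⟨hx, hxS⟩ y ⟨hy, hyS⟩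
  have hdist : dist x y ≤ K * dist x y := by
    simpa only [hx.eq, hy.eq] using h.dist_le_mul x hxS y hyS
  by_contra hne
  exact hdist.not_gt (mul_lt_of_lt_one_left (dist_pos.2 hne) hK)

theorem IsAttracting.finite_fixedPoints_inter {f : X → X} (h : IsAttracting f U W ε)
    (hU : U.Finite) : (Function.fixedPoints f ∩ thickening ε U).Finite := by
  refine (hU.biUnion fun a ha => (subsingleton_fixedPoints_inter_of_lipschitzOnWith
    (h.lipschitzOnWith a ha) (by norm_num)).finite).subset ?_
  rintro x ⟨hfix, hx⟩
  obtain ⟨a, ha, hxa⟩ := Metric.mem_thickening_iff.1 hx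
  refine mem_iUnion₂.2 ⟨a, ha, hfix, Metric.mem_closedBall.2 ?_⟩
  linarith [dist_nonneg (x := x) (y := a)]

theorem IsAttracting.finite_fixedPoints {f : Equiv.Perm X} (h : IsAttracting f U W ε)
    (h' : IsAttracting (f⁻¹ : Equiv.Perm X) W U ε) (hU : U.Finite) (hW : W.Finite) :
    (Function.fixedPoints f).Finite := by
  refine ((h.finite_fixedPoints_inter hU).union (h'.finite_fixedPoints_inter hW)).subset
    fun x hx => ?_
  have hx' : x ∈ Function.fixedPoints (f⁻¹ : Equiv.Perm X) := (Equiv.symm_apply_eq f).2 hx.symm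
  exact (h.mem_thickening_or_mem_thickening hx).imp (fun hU => ⟨hx, hU⟩) fun hW => ⟨hx', hW⟩

end Attracting

section Hyperbolic

variable {f : Equiv.Perm 𝕊} {Φ : ℝ → ℝ} {x : ℝ} {C : NNReal} {V : Set 𝕊}

theorem eventually_dist_coe_eq (x : ℝ) : ∀ᶠ y : ℝ in 𝓝 x, dist (y : 𝕊) x = dist y x := by
  filter_upwards [Metric.ball_mem_nhds x one_half_pos] with y hy
  exact dist_coe_eq (le_of_lt hy)

theorem IsC1Lift.tendsto_dist_div_dist (h : IsC1Lift f Φ) (x : ℝ) :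
    Tendsto (fun y : ℝ => dist (f y) (f x) / dist (y : 𝕊) x) (𝓝[≠] x) (𝓝 (deriv Φ x)) := by
  have hslope := (hasDerivAt_iff_tendsto_slope.1 (h.differentiable x).hasDerivAt).norm
  rw [Real.norm_of_nonneg (h.deriv_pos x).le] at hslope
  refine hslope.congr' (nhdsWithin_le_nhds ?_)
  filter_upwards [eventually_dist_coe_eq x,
    h.1.1.continuousAt.eventually (eventually_dist_coe_eq (Φ x))] with y hy hΦy
  rw [h.1.2.2.2, h.1.2.2.2, hy, hΦy, slope_def_field, norm_div, ← dist_eq_norm, ← dist_eq_norm]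

theorem IsC1Lift.deriv_le_of_lipschitzOnWith (h : IsC1Lift f Φ) (hV : V ∈ 𝓝 (x : 𝕊))
    (hf : LipschitzOnWith C f V) : deriv Φ x ≤ C := by
  refine le_of_tendsto (h.tendsto_dist_div_dist x) (nhdsWithin_le_nhds ?_)
  filter_upwards [(AddCircle.continuous_mk' 1).continuousAt.preimage_mem_nhds hV] with y hy
  exact div_le_of_le_mul₀ dist_nonneg C.2 (hf.dist_le_mul _ hy _ (mem_of_mem_nhds hV))

theorem IsC1Lift.inv_le_deriv_of_lipschitzOnWith_inv (h : IsC1Lift f Φ)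
    (hV : V ∈ 𝓝 (f (x : 𝕊))) (hf : LipschitzOnWith C (f⁻¹ : Equiv.Perm 𝕊) V) :
    (C : ℝ)⁻¹ ≤ deriv Φ x := by
  have hcont : Continuous f := IsOPHomeo.continuous ⟨_, h.1⟩
  refine ge_of_tendsto (h.tendsto_dist_div_dist x) ?_
  filter_upwards [nhdsWithin_le_nhds (eventually_dist_coe_eq x), self_mem_nhdsWithin,
    nhdsWithin_le_nhds
      ((hcont.comp (AddCircle.continuous_mk' 1)).continuousAt.preimage_mem_nhds hV)]
    with y hxy hne hy
  have hdist : dist (y : 𝕊) x ≤ C * dist (f y) (f x) := by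
    simpa using hf.dist_le_mul _ hy _ (mem_of_mem_nhds hV)
  have hpos : 0 < dist (y : 𝕊) x := by rw [hxy]; exact dist_pos.2 hne
  rw [le_div_iff₀ hpos]
  exact inv_mul_le_of_le_mul₀ C.2 dist_nonneg hdist

theorem IsC1Lift.deriv_ne_one_of_isAttracting {U W : Set 𝕊} {ε : ℝ} (h : IsC1Lift f Φ)
    (hf : IsAttracting f U W ε) (hf' : IsAttracting (f⁻¹ : Equiv.Perm 𝕊) W U ε)
    (hx : f (x : 𝕊) = x) : deriv Φ x ≠ 1 := by
  obtain hU | hW := hf.mem_thickening_or_mem_thickening hx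
  · obtain ⟨V, hV, hlip⟩ := hf.exists_mem_nhds_lipschitzOnWith hU
    have hle := h.deriv_le_of_lipschitzOnWith hV hlip
    norm_num at hle
    linarith
  · obtain ⟨V, hV, hlip⟩ := hf'.exists_mem_nhds_lipschitzOnWith hW
    have hle := h.inv_le_deriv_of_lipschitzOnWith_inv (hx.symm ▸ hV) hlip
    norm_num at hle
    linarith

end Hyperbolic

section SchottkyWords

open Metric (closedBall thickening thickening_mono thickening_iUnion)

variable {ι : Type*}

section PseudoMetricSpace

variable {X : Type*} [PseudoMetricSpace X] {s : ι → Equiv.Perm X} {R A : ι → Set X} {ε : ℝ}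

theorem IsSchottky.mapsTo_thickening_iUnion_compl (h : IsSchottky s R A ε) (i : ι) :
    MapsTo (s i) (thickening ε (⋃ j, R j))ᶜ (thickening ε (A i)) := by
  rw [thickening_iUnion]
  exact (h.mapsTo i).mono_left
    (compl_subset_compl.2 (subset_iUnion (fun j => thickening ε (R j)) i))

theorem IsSchottky.disjoint_thickening_iUnion (h : IsSchottky s R A ε) :
    Disjoint (thickening (3 * ε) (⋃ i, A i)) (thickening (3 * ε) (⋃ i, R i)) := by
  simp only [thickening_iUnion, disjoint_iUnion_left, disjoint_iUnion_right]
  exact fun i j => h.disjoint j i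

theorem IsSchottky.thickening_subset_compl (h : IsSchottky s R A ε) (hε : 0 ≤ ε) :
    thickening (3 * ε) (⋃ i, A i) ⊆ (thickening ε (⋃ i, R i))ᶜ :=
  (h.disjoint_thickening_iUnion.mono_right
    (thickening_mono (by linarith) _)).subset_compl_right

theorem IsSchottky.mapsTo_compl (h : IsSchottky s R A ε) (hε : 0 ≤ ε) (i : ι) :
    MapsTo (s i) (thickening ε (⋃ j, R j))ᶜ (thickening ε (⋃ j, R j))ᶜ :=
  (h.mapsTo_thickening_iUnion_compl i).mono_right
    (((thickening_mono (by linarith) _).trans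
      (Metric.thickening_subset_of_subset _ (subset_iUnion A i))).trans
        (h.thickening_subset_compl hε))

theorem IsSchottky.mapsTo_prod_map_iUnion (h : IsSchottky s R A ε) (hε : 0 ≤ ε) {w : List ι}
    (hw : w ≠ []) :
    MapsTo (w.map s).prod (thickening ε (⋃ i, R i))ᶜ (thickening ε (⋃ i, A i)) := by
  obtain ⟨i, u, rfl⟩ := List.exists_cons_of_ne_nil hw
  rw [List.map_cons, List.prod_cons, Equiv.Perm.coe_mul]
  exact ((h.mapsTo_thickening_iUnion_compl i).mono_right
    (Metric.thickening_subset_of_subset _ (subset_iUnion A i))).comp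
      (mapsTo_prod_map (h.mapsTo_compl hε) u)

theorem IsSchottky.pairwise_disjoint_image (h : IsSchottky s R A ε) (hε : 0 ≤ ε) :
    Pairwise fun i j => Disjoint (s i '' (thickening ε (⋃ i, R i))ᶜ)
      (s j '' (thickening ε (⋃ i, R i))ᶜ) := fun i j hij =>
  (h.disjoint_attractors hij).mono
    ((h.mapsTo_thickening_iUnion_compl i).image_subset.trans (thickening_mono (by linarith) _))
    ((h.mapsTo_thickening_iUnion_compl j).image_subset.trans (thickening_mono (by linarith) _))

end PseudoMetricSpace

variable [Fintype ι] {s : ι → Equiv.Perm 𝕊} {R A : ι → Set 𝕊} {ε : ℝ}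

theorem IsSchottky.eventually_isAttracting (h : IsSchottky s R A ε) (hι : 2 ≤ Fintype.card ι)
    (hs : ∀ i, IsC1Diffeo (s i)) (hA : ∀ i, (A i).Finite) (hε : 0 < ε) (hε' : ε ≤ 1 / 8) :
    ∀ᶠ w in densityOne ι, IsAttracting (w.map s).prod (⋃ i, A i) (⋃ i, R i) ε := by
  have hball : ∀ a ∈ ⋃ i, A i, closedBall a (2 * ε) ⊆ (thickening ε (⋃ i, R i))ᶜ := fun a ha =>
    ((Metric.closedBall_subset_ball (by linarith)).trans
      (Metric.ball_subset_thickening ha (3 * ε))).trans (h.thickening_subset_compl hε.le)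
  have hlip : ∀ᶠ w in densityOne ι, ∀ a ∈ ⋃ i, A i,
      LipschitzOnWith 4⁻¹ (w.map s).prod (closedBall a (2 * ε)) :=
    (eventually_all_finite (finite_iUnion hA)).2 fun a ha =>
      eventually_lipschitzOnWith_prod_map hι hs (h.mapsTo_compl hε.le)
        (h.pairwise_disjoint_image hε.le) a (by linarith) (by linarith) (hball a ha)
        (by norm_num)
  filter_upwards [hlip, eventually_le_length_densityOne 1] with w hw hlen
  exact ⟨h.mapsTo_prod_map_iUnion hε.le (List.length_pos_iff.1 hlen),
    h.disjoint_thickening_iUnion.mono (thickening_mono (by linarith) _)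
      (thickening_mono (by linarith) _), hw⟩

theorem IsSchottky.exists_isAttracting (h : IsSchottky s R A ε) (hι : 2 ≤ Fintype.card ι)
    (hs : ∀ i, IsC1Diffeo (s i)) (hs' : ∀ i, IsC1Diffeo (s i)⁻¹) (hR : ∀ i, (R i).Finite)
    (hA : ∀ i, (A i).Finite) (hε : 0 < ε) (hε' : ε ≤ 1 / 8) :
    ∃ w : List ι, IsAttracting (w.map s).prod (⋃ i, A i) (⋃ i, R i) ε ∧
      IsAttracting ((w.map s).prod⁻¹ : Equiv.Perm 𝕊) (⋃ i, R i) (⋃ i, A i) ε := by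
  have : Nonempty ι := Fintype.card_pos_iff.1 (by lia)
  obtain ⟨w, hw, hw'⟩ := ((h.eventually_isAttracting hι hs hA hε hε').and
    (tendsto_reverse_densityOne.eventually
      (h.inv.eventually_isAttracting hι hs' hR hε hε'))).exists
  refine ⟨w, hw, ?_⟩
  rwa [List.prod_inv_reverse, List.map_map, ← List.map_reverse]

end SchottkyWords

theorem exists_isAttracting_of_not_hasInvariantProbability {G : Type*} [Group G]
    {ρ : G →* Equiv.Perm 𝕊} (hρ : ∀ g, IsC1Diffeo (ρ g)) (hno : ¬HasInvariantProbability ρ) :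
    ∃ (g : G) (U W : Set 𝕊) (ε : ℝ), 0 < ε ∧ U.Finite ∧ U.Nonempty ∧ W.Finite ∧
      IsAttracting (ρ g) U W ε ∧ IsAttracting (ρ g⁻¹) W U ε := by
  have hhomeo g : IsOPHomeo (ρ g) := (hρ g).isOPHomeo
  obtain ⟨R, A, hR, hA, hA', hcollapse⟩ := exists_collapses hhomeo hno
  obtain ⟨s, R, A, ε, hε, hR, hA, hschottky⟩ := hcollapse.exists_isSchottky
    (fun g => (hhomeo g).continuous) (infinite_orbit_of_not_hasInvariantProbability hhomeo hno)
    hR hA hA' (δ := 1 / 8) (by norm_num)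
  obtain ⟨w, hw, hw'⟩ := hschottky.exists_isAttracting (by simp) (fun i => hρ (s i))
    (fun i => map_inv ρ (s i) ▸ hρ (s i)⁻¹) hR (fun i => (hA i).1) hε.1 hε.2.le
  have hprod : ρ (w.map s).prod = (w.map fun i => ρ (s i)).prod := by
    rw [map_list_prod, List.map_map, Function.comp_def]
  refine ⟨(w.map s).prod, ⋃ i, A i, ⋃ i, R i, ε, hε.1, finite_iUnion fun i => (hA i).1,
    nonempty_iUnion.2 ⟨true, (hA true).2⟩, finite_iUnion hR, ?_, ?_⟩
  · rwa [hprod]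
  · rwa [map_inv, hprod]

theorem deroin_kleptsyn_navas_general {G : Type*} [Group G] (ρ : G →* Equiv.Perm 𝕊)
    (hρ : ∀ g : G, IsC1Diffeo (ρ g)) (hno : ¬HasInvariantProbability ρ) :
    ∃ g : G,
      (∃ F : ℝ → ℝ, IsC1Lift (ρ g) F ∧ ∀ x : ℝ, ρ g (x : 𝕊) = (x : 𝕊) → deriv F x ≠ 1) ∧
      {x : 𝕊 | ρ g x = x}.Nonempty ∧ {x : 𝕊 | ρ g x = x}.Finite := by
  obtain ⟨g, U, W, ε, hε, hU, hne, hW, hg, hg'⟩ :=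
    exists_isAttracting_of_not_hasInvariantProbability hρ hno
  obtain ⟨k, hk, hfix⟩ := hg.exists_iterate_eq hε hU hne
  have hpow (h : G) : ⇑(ρ (h ^ k)) = (ρ h)^[k] := by rw [map_pow, Equiv.Perm.iterate_eq_pow]
  have hattr : IsAttracting (ρ (g ^ k)) U W ε := hpow g ▸ hg.iterate hε hk
  have hattr' : IsAttracting ((ρ (g ^ k))⁻¹ : Equiv.Perm 𝕊) W U ε := by
    rw [← map_inv, ← inv_pow, hpow]
    exact hg'.iterate hε hk
  obtain ⟨F, hF⟩ := hρ (g ^ k)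
  exact ⟨g ^ k, ⟨F, hF, fun x hx => hF.deriv_ne_one_of_isAttracting hattr hattr' hx⟩,
    hpow g ▸ hfix, hattr.finite_fixedPoints hattr' hU hW⟩

/-- Deroin–Kleptsyn–Navas.  Let `G` be a countable group with an
orientation preserving `C¹` action on the circle.  If there is no `G`-invariant Borel
probability measure, then some `g ∈ G` has only hyperbolic fixed points (the derivative
of `g` at each fixed point is `≠ 1`); in particular `g` has a nonempty finite set of
fixed points. -/
theorem deroin_kleptsyn_navas
    (G : Type*) [Group G] [Countable G]
    (ρ : G →* Equiv.Perm 𝕊) (hρ : ∀ g : G, IsC1Diffeo (ρ g))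
    (hno : ¬ ∃ μ : Measure 𝕊, IsProbabilityMeasure μ ∧ ∀ g : G, Measure.map (ρ g) μ = μ) :
    ∃ g : G,
      (∃ F : ℝ → ℝ, IsC1Lift (ρ g) F ∧ ∀ x : ℝ, ρ g (x : 𝕊) = (x : 𝕊) → deriv F x ≠ 1) ∧
      {x : 𝕊 | ρ g x = x}.Nonempty ∧ {x : 𝕊 | ρ g x = x}.Finite :=
  deroin_kleptsyn_navas_general ρ hρ hno
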